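/- arXiv:1804.01362 — 2 statements merged into one kernel-verified Lean document; each statement's English description precedes it below -/
import Mathlib

section
/- Let log J be an α-Hölder g-function with unique g-measure μ and entropy h_μ(σ). Fix x,y∈Ω and let a:Ω→ℝ be continuous. Let W* denote the set of all finite words over 𝒜, and let ((a_k,λ_k))_{k≥1} be an enumeration of the disjoint union of the families {(a(wx),𝕁(wx)) : w∈W*} and {(a(wy),𝕁(wx)) : w∈W*} such that (λ_k)_{k≥1} is nonincreasing. Then lim_{n→∞} (1/log n) Σ_{k=1}^n a_k λ_k = (2/h_μ(σ)) ∫_Ω a dμ. -/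
open Real MeasureTheory Filter Topology Set

open scoped Classical

namespace GS

/-- The full shift space `Ω = 𝒜^ℕ`. -/
abbrev Omega (𝒜 : Type) : Type := ℕ → 𝒜

variable {𝒜 : Type}

/-- The left shift `σ(x₁,x₂,…) = (x₂,x₃,…)`. -/
def shift (x : Omega 𝒜) : Omega 𝒜 := fun n => x (n + 1)

/-- Prepending a symbol: `qx = (q,x₁,x₂,…)`. -/
def cons (q : 𝒜) (x : Omega 𝒜) : Omega 𝒜 := fun n => Nat.casesOn n q x

/-- Concatenation `wx` of a finite word `w ∈ 𝒜^k` with `x ∈ Ω`. -/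
def concat {k : ℕ} (w : Fin k → 𝒜) (x : Omega 𝒜) : Omega 𝒜 :=
  fun n => if h : n < k then w ⟨n, h⟩ else x (n - k)

/-- The metric `d(x,y) = 2^{-N(x,y)}`, `N(x,y) = inf{k ≥ 1 : x_k ≠ y_k}`
(sequences are indexed from `0` in Lean, whence the `+ 1`). -/
noncomputable def dOmega (x y : Omega 𝒜) : ℝ :=
  if x = y then 0 else (1 / 2 : ℝ) ^ (sInf {k : ℕ | x k ≠ y k} + 1)

/-- `a : Ω → E` is `α`-Hölder (w.r.t. `dOmega`):
`Hol_α(a) = sup_{x≠y} ‖a x - a y‖ / d(x,y)^α < ∞`. -/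
def IsHolderW (α : ℝ) {E : Type*} [NormedAddCommGroup E] (a : Omega 𝒜 → E) : Prop :=
  ∃ C : ℝ, ∀ x y : Omega 𝒜, ‖a x - a y‖ ≤ C * (dOmega x y) ^ α

/-- The Hölder constant `Hol_α(a) = sup_{x≠y} ‖a x - a y‖ / d(x,y)^α`. -/
noncomputable def HolConst (α : ℝ) {E : Type*} [NormedAddCommGroup E] (a : Omega 𝒜 → E) : ℝ :=
  sSup {r : ℝ | ∃ x y : Omega 𝒜, x ≠ y ∧ r = ‖a x - a y‖ / (dOmega x y) ^ α}

/-- `J` is a `g`-function: continuous, strictly positive, with `∑_{q∈𝒜} J(qx) = 1`. -/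
def IsGFunction [Fintype 𝒜] [TopologicalSpace 𝒜] (J : Omega 𝒜 → ℝ) : Prop :=
  Continuous J ∧ (∀ x, 0 < J x) ∧ ∀ x : Omega 𝒜, ∑ q : 𝒜, J (cons q x) = 1

/-- The Ruelle transfer operator `(L_f φ)(x) = ∑_{q∈𝒜} e^{f(qx)} φ(qx)`. -/
noncomputable def ruelle [Fintype 𝒜] {E : Type*} [AddCommMonoid E] [Module ℝ E]
    (f : Omega 𝒜 → ℝ) (φ : Omega 𝒜 → E) : Omega 𝒜 → E :=
  fun x => ∑ q : 𝒜, Real.exp (f (cons q x)) • φ (cons q x)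

/-- Birkhoff sum `S_k(f) = ∑_{j=0}^{k-1} f ∘ σ^j`. -/
def birkhoff (f : Omega 𝒜 → ℝ) (k : ℕ) (x : Omega 𝒜) : ℝ :=
  ∑ j ∈ Finset.range k, f (shift^[j] x)

/-- `𝕁(wx) = exp (S_k(log J)(wx))` for a word `w` of length `k`. -/
noncomputable def JBirk (J : Omega 𝒜 → ℝ) (k : ℕ) (w : Fin k → 𝒜) (x : Omega 𝒜) : ℝ :=
  Real.exp (birkhoff (fun z => Real.log (J z)) k (concat w x))

/-- `ζ₊(s) = ∑_{k≥1} ∑_{w∈𝒜^k} a(wx) 𝕁(wx)^s`. -/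
noncomputable def zetaPlus [Fintype 𝒜] (J : Omega 𝒜 → ℝ) (a : Omega 𝒜 → ℂ) (x : Omega 𝒜)
    (s : ℝ) : ℂ :=
  ∑' k : ℕ, ∑ w : Fin (k + 1) → 𝒜, a (concat w x) * (((JBirk J (k + 1) w x) ^ s : ℝ) : ℂ)

/-- `ζ₋(s) = ∑_{k≥1} ∑_{w∈𝒜^k} a(wy) 𝕁(wx)^s`. -/
noncomputable def zetaMinus [Fintype 𝒜] (J : Omega 𝒜 → ℝ) (a : Omega 𝒜 → ℂ) (x y : Omega 𝒜)
    (s : ℝ) : ℂ :=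
  ∑' k : ℕ, ∑ w : Fin (k + 1) → 𝒜, a (concat w y) * (((JBirk J (k + 1) w x) ^ s : ℝ) : ℂ)

/-- `L_{log J}^* μ = μ`, i.e. `μ` is a `g`-measure of `J`, tested against continuous functions. -/
def IsGMeasure [Fintype 𝒜] [TopologicalSpace 𝒜] [MeasurableSpace 𝒜]
    (J : Omega 𝒜 → ℝ) (μ : Measure (Omega 𝒜)) : Prop :=
  IsProbabilityMeasure μ ∧
    ∀ φ : Omega 𝒜 → ℂ, Continuous φ →
      ∫ x, ruelle (fun z => Real.log (J z)) φ x ∂μ = ∫ x, φ x ∂μ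

/-- The cylinder set determined by a finite word. -/
def cyl {k : ℕ} (w : Fin k → 𝒜) : Set (Omega 𝒜) := {x | ∀ i : Fin k, x (i : ℕ) = w i}

/-- Entropy of the partition into cylinders of length `n`. -/
noncomputable def blockEntropy [Fintype 𝒜] [MeasurableSpace 𝒜] (μ : Measure (Omega 𝒜))
    (n : ℕ) : ℝ :=
  ∑ w : Fin n → 𝒜, Real.negMulLog (μ (cyl w)).toReal

/-- Kolmogorov–Sinai entropy `h_μ(σ)` of a shift-invariant measure, computed through the
generating partition into cylinders: `h_μ(σ) = lim_n H_n/n = inf_{n≥1} H_n/n`. -/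
noncomputable def KSentropy [Fintype 𝒜] [MeasurableSpace 𝒜] (μ : Measure (Omega 𝒜)) : ℝ :=
  ⨅ n : ℕ, blockEntropy μ (n + 1) / (n + 1)

/-- Topological pressure `P(f) = sup {h_μ(σ) + ∫ f dμ}` over shift-invariant Borel
probability measures. -/
noncomputable def pressure [Fintype 𝒜] [MeasurableSpace 𝒜] (f : Omega 𝒜 → ℝ) : ℝ :=
  sSup {r : ℝ | ∃ μ : Measure (Omega 𝒜), IsProbabilityMeasure μ ∧
    Measure.map shift μ = μ ∧ r = KSentropy μ + ∫ x, f x ∂μ}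

/-- `μ` is an equilibrium state of `f`. -/
def IsEquilibrium [Fintype 𝒜] [MeasurableSpace 𝒜] (f : Omega 𝒜 → ℝ)
    (μ : Measure (Omega 𝒜)) : Prop :=
  IsProbabilityMeasure μ ∧ Measure.map shift μ = μ ∧
    KSentropy μ + ∫ x, f x ∂μ = pressure f

/-- The Walters class `W(Ω,σ)`:
`sup_{n≥1} sup_{w∈𝒜^n} |S_n(f)(wx) − S_n(f)(wy)| → 0` as `d(x,y) → 0`. -/
def WaltersClass [TopologicalSpace 𝒜] (f : Omega 𝒜 → ℝ) : Prop :=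
  Continuous f ∧ ∀ ε > (0:ℝ), ∃ δ > (0:ℝ), ∀ x y : Omega 𝒜, dOmega x y < δ →
    ∀ (n : ℕ) (w : Fin n → 𝒜),
      |birkhoff f n (concat w x) - birkhoff f n (concat w y)| ≤ ε

/-- The set `W*` of finite (nonempty) words over `𝒜`. -/
def Words (𝒜 : Type) : Type := Σ k : ℕ, Fin (k + 1) → 𝒜

end GS
namespace GS

variable {𝒜 : Type}

/-- The value `a_k`: `a(wx)` on the first copy of `W*`, `a(wy)` on the second. -/
def wordVal (a : Omega 𝒜 → ℝ) (x y : Omega 𝒜) : Words 𝒜 ⊕ Words 𝒜 → ℝ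
  | Sum.inl w => a (concat w.2 x)
  | Sum.inr w => a (concat w.2 y)

/-- The eigenvalue `λ_k = 𝕁(wx)` (on both copies of `W*`). -/
noncomputable def wordLam (J : Omega 𝒜 → ℝ) (x : Omega 𝒜) : Words 𝒜 ⊕ Words 𝒜 → ℝ
  | Sum.inl w => JBirk J (w.1 + 1) w.2 x
  | Sum.inr w => JBirk J (w.1 + 1) w.2 x

/-!
For `f = log J` put `h = -∫ f dμ`, which is the entropy of `μ`. Uniqueness of `μ` and the
Hahn–Banach theorem bound a continuous `φ` by `∫ φ dμ + ε` plus a coboundary `ψ - L ψ` of the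
transfer operator `L`. Iterating `L`, the Cesàro means of `L^k φ` converge to `∫ φ dμ`; moreover
`ψ - L ψ` is a bounded martingale difference `ψ - (L ψ) ∘ σ` plus a telescoping term, so Chebyshev's
inequality yields the weak law of large numbers for Birkhoff sums under the weights `𝕁(wx)`. With
`φ = ± f` this is an equipartition property: up to a small mass, a word of length `k` has
information `-log 𝕁(wx) ≈ k h`.

Therefore the eigenvalues `λ ≥ e^{-T}` are, up to a mass `o(T)`, those of the words of length at
most `T / h`, and the sum of `a λ` over them is asymptotic to `T / h` times the mean `2 ∫ a dμ` of
the sums over words of fixed length. For `a = 1` this relates the partial sums of `λ` to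
`T = -log λ_n`, and an ODE-like comparison turns the relation into `T ∼ log n`.
-/

section Sequences

lemma exp_mul_sum_range_le {u : ℕ → ℝ} {A γ : ℝ} (hγ : 0 ≤ γ) (hu : ∀ k, 0 ≤ u k)
    (hA : ∀ k, u k ≤ A)
    (h : ∀ᶠ n in atTop, u n * exp (γ * ∑ k ∈ Finset.range n, u k) ≤ 1) :
    ∃ C > 0, ∀ᶠ n : ℕ in atTop, exp (γ * ∑ k ∈ Finset.range n, u k) ≤ C * (n + 1) := by
  obtain ⟨N, hN⟩ := eventually_atTop.1 h
  set E : ℕ → ℝ := fun n => exp (γ * ∑ k ∈ Finset.range n, u k)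
  set D := γ * exp (γ * A)
  have hD : 0 ≤ D := by positivity
  have hstep : ∀ n ≥ N, E (n + 1) ≤ E n + D := fun n hn => by
    have hexp : exp (γ * u n) ≤ 1 + γ * u n * exp (γ * u n) := by
      have := mul_le_mul_of_nonneg_right (one_sub_le_exp_neg (γ * u n)) (exp_pos (γ * u n)).le
      rw [← exp_add, neg_add_cancel, exp_zero] at this
      linarith
    calc E (n + 1) = E n * exp (γ * u n) := by
          simp only [E, Finset.sum_range_succ, mul_add, exp_add]
      _ ≤ E n * (1 + γ * u n * exp (γ * u n)) := by gcongr
      _ = E n + γ * (u n * E n) * exp (γ * u n) := by ring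
      _ ≤ E n + γ * 1 * exp (γ * A) := by
          have := hu n
          gcongr
          exacts [hN n hn, hA n]
      _ = E n + D := by rw [mul_one]
  refine ⟨E N + D, by positivity, eventually_atTop.2 ⟨N, fun n hn => ?_⟩⟩
  induction n, hn using Nat.le_induction with
  | base =>
    have : 0 ≤ (E N + D) * N := by positivity
    linarith
  | succ n hn ih =>
    push_cast
    linarith [hstep n hn, exp_pos (γ * ∑ k ∈ Finset.range N, u k)]

section LogAsymptotics

variable {u : ℕ → ℝ} {c : ℝ}

lemma eventually_lt_log_div_neg_log (hc : 0 < c) (hpos : ∀ n, 0 < u n)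
    (hanti : Antitone u) (hu : Tendsto (fun n => -log (u n)) atTop atTop)
    (hsum : Tendsto (fun n => (∑ k ∈ Finset.range n, u k) / -log (u n)) atTop (𝓝 c)) {l : ℝ}
    (hl : l < 1) : ∀ᶠ n : ℕ in atTop, l < log n / -log (u n) := by
  set T : ℕ → ℝ := fun n => -log (u n) with hT
  set S : ℕ → ℝ := fun n => ∑ k ∈ Finset.range n, u k
  obtain ⟨m, hlm, hm⟩ := exists_between (max_lt hl one_pos)
  have hm0 : 0 < m := (le_max_right _ _).trans_lt hlm
  have hlim : Tendsto (fun n => m / c * (S n / T n)) atTop (𝓝 m) := by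
    simpa [hc.ne'] using hsum.const_mul (m / c)
  have hexp : ∀ᶠ n in atTop, u n * exp (m / c * S n) ≤ 1 := by
    filter_upwards [hlim.eventually_lt_const hm, hu.eventually_gt_atTop 0] with n hn hTn
    rw [← mul_div_assoc, div_lt_one hTn] at hn
    calc u n * exp (m / c * S n) ≤ u n * exp (T n) := by
          have := (hpos n).le
          gcongr
      _ = 1 := by simp [hT, exp_neg, exp_log (hpos n), (hpos n).ne']
  obtain ⟨C, hC, hbound⟩ := exp_mul_sum_range_le (by positivity) (fun k => (hpos k).le)
    (fun k => hanti (Nat.zero_le k)) hexp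
  have hlower : Tendsto (fun n => m / c * (S n / T n) - log (2 * C) / T n) atTop (𝓝 m) := by
    simpa using hlim.sub (tendsto_const_nhds.div_atTop hu)
  filter_upwards [hlower.eventually_const_lt ((le_max_left _ _).trans_lt hlm), hbound,
    hu.eventually_gt_atTop 0, eventually_ge_atTop 1] with n hln hbn hTn hn
  have hn1 : (1 : ℝ) ≤ n := by exact_mod_cast hn
  have hlog : m / c * S n ≤ log (2 * C) + log n := by
    rw [← log_mul (by positivity) (by positivity), le_log_iff_exp_le (by positivity)]
    nlinarith
  calc l < m / c * (S n / T n) - log (2 * C) / T n := hln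
    _ = (m / c * S n - log (2 * C)) / T n := by ring
    _ ≤ log n / T n := by gcongr; linarith

lemma eventually_log_div_neg_log_lt (hc : 0 < c) (hpos : ∀ n, 0 < u n)
    (hanti : Antitone u) (hu : Tendsto (fun n => -log (u n)) atTop atTop)
    (hsum : Tendsto (fun n => (∑ k ∈ Finset.range n, u k) / -log (u n)) atTop (𝓝 c)) {r : ℝ}
    (hr : 1 < r) : ∀ᶠ n : ℕ in atTop, log n / -log (u n) < r := by
  set T : ℕ → ℝ := fun n => -log (u n) with hT
  set S : ℕ → ℝ := fun n => ∑ k ∈ Finset.range n, u k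
  have hupper : Tendsto (fun n => 1 + log (S n / T n) / T n + log (T n) / T n) atTop (𝓝 1) := by
    have hratio : Tendsto (fun n => log (S n / T n) / T n) atTop (𝓝 0) :=
      (hsum.log hc.ne').div_atTop hu
    have hlogT : Tendsto (fun n => log (T n) / T n) atTop (𝓝 0) :=
      isLittleO_log_id_atTop.tendsto_div_nhds_zero.comp hu
    simpa using (hratio.const_add 1).add hlogT
  filter_upwards [hupper.eventually_lt_const hr, hu.eventually_gt_atTop 0,
    eventually_ge_atTop 1] with n hrn hTn hn
  have hn0 : (0 : ℝ) < n := by exact_mod_cast hn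
  have hSn : n * u n ≤ S n := by
    simpa using Finset.card_nsmul_le_sum (Finset.range n) u (u n)
      fun k hk => hanti (Finset.mem_range.1 hk).le
  have hSpos : 0 < S n := (mul_pos hn0 (hpos n)).trans_le hSn
  have hlog : log n - T n ≤ log (S n / T n) + log (T n) := by
    rw [log_div hSpos.ne' hTn.ne', sub_add_cancel]
    simpa [hT, log_mul hn0.ne' (hpos n).ne'] using log_le_log (by have := hpos n; positivity) hSn
  calc log n / T n ≤ (T n + log (S n / T n) + log (T n)) / T n := by gcongr; linarith
    _ = 1 + log (S n / T n) / T n + log (T n) / T n := by field_simp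
    _ < r := hrn

-- If `S n = ∑ k < n, u k` is asymptotic to `-c log (u n)`, then `u` behaves like the solution of
-- the differential equation `S' = exp (-S / c)`, whence `S n ∼ c log n`.
theorem tendsto_log_div_neg_log (hc : 0 < c) (hpos : ∀ n, 0 < u n)
    (hanti : Antitone u) (hu : Tendsto (fun n => -log (u n)) atTop atTop)
    (hsum : Tendsto (fun n => (∑ k ∈ Finset.range n, u k) / -log (u n)) atTop (𝓝 c)) :
    Tendsto (fun n : ℕ => log n / -log (u n)) atTop (𝓝 1) :=
  tendsto_order.2 ⟨fun _ hl => eventually_lt_log_div_neg_log hc hpos hanti hu hsum hl,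
    fun _ hr => eventually_log_div_neg_log_lt hc hpos hanti hu hsum hr⟩

end LogAsymptotics

lemma tendsto_sum_range_comp_div {ι : Type*} {l : Filter ι} {u : ℕ → ℝ} {m c : ℝ}
    (hu : Tendsto (fun n : ℕ => (n : ℝ)⁻¹ * ∑ k ∈ Finset.range n, u k) atTop (𝓝 m))
    {N : ι → ℕ} {T : ι → ℝ} (hN : Tendsto N l atTop)
    (hNT : Tendsto (fun i => (N i : ℝ) / T i) l (𝓝 c)) :
    Tendsto (fun i => (∑ k ∈ Finset.range (N i), u k) / T i) l (𝓝 (m * c)) := by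
  refine ((hu.comp hN).mul hNT).congr' ?_
  filter_upwards [hN.eventually_ge_atTop 1] with i hi
  have : (N i : ℝ) ≠ 0 := by positivity
  simp only [Function.comp]
  field_simp

lemma abs_sum_range_sub_sum_range_le {g c u : ℕ → ℝ} {A : ℝ} {N₁ N₂ N₃ : ℕ} (hu : ∀ k, 0 ≤ u k)
    (h12 : N₁ ≤ N₂) (h23 : N₂ ≤ N₃) (hlow : ∀ k < N₁, |g k - c k| ≤ u k) (hA : ∀ k, |g k| ≤ A)
    (hhigh : ∀ k ≥ N₂, |g k| ≤ u k) :
    |∑ k ∈ Finset.range N₃, g k - ∑ k ∈ Finset.range N₁, c k| ≤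
      ∑ k ∈ Finset.range N₃, u k + A * (N₂ - N₁) := by
  have hsplit : ∀ f : ℕ → ℝ, ∑ k ∈ Finset.range N₃, f k = ∑ k ∈ Finset.range N₁, f k +
      ∑ k ∈ Finset.Ico N₁ N₂, f k + ∑ k ∈ Finset.Ico N₂ N₃, f k := fun f => by
    rw [Finset.sum_range_add_sum_Ico _ h12, Finset.sum_range_add_sum_Ico _ h23]
  have hmid : ∀ k, |g k| ≤ u k + A := fun k => (hA k).trans (le_add_of_nonneg_left (hu k))
  calc |∑ k ∈ Finset.range N₃, g k - ∑ k ∈ Finset.range N₁, c k|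
      = |∑ k ∈ Finset.range N₁, (g k - c k) + ∑ k ∈ Finset.Ico N₁ N₂, g k +
          ∑ k ∈ Finset.Ico N₂ N₃, g k| := by
        rw [hsplit g, Finset.sum_sub_distrib]
        congr 1
        ring
    _ ≤ ∑ k ∈ Finset.range N₁, u k + ∑ k ∈ Finset.Ico N₁ N₂, (u k + A) +
          ∑ k ∈ Finset.Ico N₂ N₃, u k := by
        refine (abs_add_three _ _ _).trans (add_le_add_three ?_ ?_ ?_) <;>
          refine (Finset.abs_sum_le_sum_abs _ _).trans (Finset.sum_le_sum fun k hk => ?_)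
        exacts [hlow k (Finset.mem_range.1 hk), hmid k, hhigh k (Finset.mem_Ico.1 hk).1]
    _ = ∑ k ∈ Finset.range N₃, u k + A * (N₂ - N₁) := by
        rw [hsplit u, Finset.sum_add_distrib, Finset.sum_const, Nat.card_Ico, nsmul_eq_mul,
          Nat.cast_sub h12]
        ring

end Sequences

section Equipartition

variable {W : ℕ → Type*}

/-- A finite set containing every index of information `-log p` less than `T` and no index of
information greater than `T`; indices of information exactly `T` are left undecided, so that all
initial segments of a nonincreasing enumeration of `p` are covered. -/
def IsSuperlevel {ι : Type*} (p : ι → ℝ) (T : ℝ) (G : Finset ι) : Prop :=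
  (∀ v, -log (p v) < T → v ∈ G) ∧ ∀ v ∈ G, -log (p v) ≤ T

variable [∀ k, Fintype (W k)]

/-- The mass of the elements of level `k` whose information `-log p` deviates from `(k + 1) h` by
at least `(k + 1) δ`. Level `k` is meant to consist of words of length `k + 1`. -/
noncomputable def atypicalMass (p : (Σ k, W k) → ℝ) (h δ : ℝ) (k : ℕ) : ℝ :=
  ∑ w : W k with (k + 1) * δ ≤ |-log (p ⟨k, w⟩) - (k + 1) * h|, p ⟨k, w⟩

/-- A positive family of weights, of total mass `M` on every level and decaying exponentially with
the level, satisfies the asymptotic equipartition property with entropy `h`. -/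
structure IsEquipartition (p : (Σ k, W k) → ℝ) (M h : ℝ) : Prop where
  entropy_pos : 0 < h
  mass_pos : 0 < M
  pos : ∀ v, 0 < p v
  sum_eq : ∀ k, ∑ w, p ⟨k, w⟩ = M
  exists_decay : ∃ κ > 0, ∀ v, κ * (v.1 + 1) ≤ -log (p v)
  tendsto_atypicalMass : ∀ δ > 0, Tendsto (atypicalMass p h δ) atTop (𝓝 0)

lemma sum_eq_sum_range_sum_filter {G : Finset (Σ k, W k)} {N : ℕ} (hN : ∀ v ∈ G, v.1 < N)
    (f : (Σ k, W k) → ℝ) :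
    ∑ v ∈ G, f v = ∑ k ∈ Finset.range N, ∑ w with (⟨k, w⟩ : Σ k, W k) ∈ G, f ⟨k, w⟩ := by
  rw [← Finset.sum_sigma (Finset.range N)
    (fun k => Finset.univ.filter fun w => (⟨k, w⟩ : Σ k, W k) ∈ G)]
  refine Finset.sum_congr (Finset.ext fun v => ?_) fun _ _ => rfl
  simpa [Finset.mem_sigma] using hN v

variable {p f : (Σ k, W k) → ℝ} {M h B δ T κ m : ℝ} {G : Finset (Σ k, W k)} {k : ℕ}

lemma abs_sum_le_mul_atypicalMass (hB : 0 ≤ B) (hp : ∀ v, 0 < p v) (hf : ∀ v, |f v| ≤ B * p v)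
    {s : Finset (W k)} (hs : ∀ w ∈ s, (k + 1) * δ ≤ |-log (p ⟨k, w⟩) - (k + 1) * h|) :
    |∑ w ∈ s, f ⟨k, w⟩| ≤ B * atypicalMass p h δ k :=
  calc |∑ w ∈ s, f ⟨k, w⟩| ≤ ∑ w ∈ s, |f ⟨k, w⟩| := Finset.abs_sum_le_sum_abs _ _
    _ ≤ ∑ w ∈ s, B * p ⟨k, w⟩ := Finset.sum_le_sum fun w _ => hf _
    _ = B * ∑ w ∈ s, p ⟨k, w⟩ := (Finset.mul_sum ..).symm
    _ ≤ B * atypicalMass p h δ k := by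
        refine mul_le_mul_of_nonneg_left ?_ hB
        exact Finset.sum_le_sum_of_subset_of_nonneg (fun w hw => by simpa using hs w hw)
          fun w _ _ => (hp _).le

lemma IsSuperlevel.abs_sum_filter_sub_le (hG : IsSuperlevel p T G) (hB : 0 ≤ B)
    (hp : ∀ v, 0 < p v) (hf : ∀ v, |f v| ≤ B * p v) (hT : (k + 1) * (h + δ) ≤ T) :
    |∑ w with (⟨k, w⟩ : Σ k, W k) ∈ G, f ⟨k, w⟩ - ∑ w, f ⟨k, w⟩| ≤
      B * atypicalMass p h δ k := by
  rw [← Finset.sum_filter_add_sum_filter_not Finset.univ (fun w => (⟨k, w⟩ : Σ k, W k) ∈ G),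
    sub_add_cancel_left, abs_neg]
  refine abs_sum_le_mul_atypicalMass hB hp hf fun w hw => le_abs.2 (Or.inl ?_)
  have := not_lt.1 fun hlt => (Finset.mem_filter.1 hw).2 (hG.1 _ hlt)
  linarith

lemma IsSuperlevel.abs_sum_filter_le (hG : IsSuperlevel p T G) (hB : 0 ≤ B)
    (hp : ∀ v, 0 < p v) (hf : ∀ v, |f v| ≤ B * p v) (hT : T ≤ (k + 1) * (h - δ)) :
    |∑ w with (⟨k, w⟩ : Σ k, W k) ∈ G, f ⟨k, w⟩| ≤ B * atypicalMass p h δ k := by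
  refine abs_sum_le_mul_atypicalMass hB hp hf fun w hw => le_abs.2 (Or.inr ?_)
  linarith [hG.2 _ (Finset.mem_filter.1 hw).2]

namespace IsEquipartition

lemma atypicalMass_nonneg (hp : IsEquipartition p M h) : 0 ≤ atypicalMass p h δ k :=
  Finset.sum_nonneg fun _ _ => (hp.pos _).le

lemma abs_sum_le_mul (hp : IsEquipartition p M h) (hB : 0 ≤ B) (hf : ∀ v, |f v| ≤ B * p v)
    (s : Finset (W k)) : |∑ w ∈ s, f ⟨k, w⟩| ≤ B * M :=
  calc |∑ w ∈ s, f ⟨k, w⟩| ≤ ∑ w ∈ s, |f ⟨k, w⟩| := Finset.abs_sum_le_sum_abs _ _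
    _ ≤ ∑ w ∈ s, B * p ⟨k, w⟩ := Finset.sum_le_sum fun w _ => hf _
    _ ≤ ∑ w, B * p ⟨k, w⟩ := Finset.sum_le_sum_of_subset_of_nonneg s.subset_univ
        fun w _ _ => mul_nonneg hB (hp.pos _).le
    _ = B * M := by rw [← Finset.mul_sum, hp.sum_eq]

-- Up to atypical words, `G` contains the levels `k < N₁`, which have `(k + 1) (h + δ) ≤ T`, and
-- misses the levels `k ≥ N₂`, which have `T ≤ (k + 1) (h - δ)`.
lemma abs_sum_sub_le (hp : IsEquipartition p M h) (hB : 0 ≤ B) (hf : ∀ v, |f v| ≤ B * p v)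
    (hG : IsSuperlevel p T G) (hκ : 0 < κ) (hdecay : ∀ v, κ * (v.1 + 1) ≤ -log (p v))
    (hδ : 0 < δ) (hδh : δ < h) {N₁ N₂ N₃ : ℕ} (h12 : N₁ ≤ N₂) (h23 : N₂ ≤ N₃)
    (hN₁ : N₁ * (h + δ) ≤ T) (hN₂ : T ≤ N₂ * (h - δ)) (hN₃ : T ≤ κ * N₃) :
    |∑ v ∈ G, f v - ∑ k ∈ Finset.range N₁, ∑ w, f ⟨k, w⟩| ≤
      B * (∑ k ∈ Finset.range N₃, atypicalMass p h δ k + M * (N₂ - N₁)) := by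
  have hlt : ∀ v ∈ G, v.1 < N₃ := fun v hv => by
    have : κ * (v.1 + 1) ≤ κ * N₃ := ((hdecay v).trans (hG.2 v hv)).trans hN₃
    exact_mod_cast le_of_mul_le_mul_left this hκ
  rw [sum_eq_sum_range_sum_filter hlt]
  refine (abs_sum_range_sub_sum_range_le (u := fun k => B * atypicalMass p h δ k) (A := B * M)
    (fun _ => mul_nonneg hB hp.atypicalMass_nonneg) h12 h23 (fun k hk => ?_)
    (fun k => hp.abs_sum_le_mul hB hf _) (fun k hk => ?_)).trans_eq ?_
  · have : (k + 1 : ℝ) ≤ N₁ := by exact_mod_cast hk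
    refine hG.abs_sum_filter_sub_le hB hp.pos hf (hN₁.trans' ?_)
    have := hp.entropy_pos
    gcongr
  · have : (N₂ : ℝ) ≤ k + 1 := by exact_mod_cast hk.trans k.le_succ
    refine hG.abs_sum_filter_le hB hp.pos hf (hN₂.trans ?_)
    have := sub_pos.2 hδh
    gcongr
  · rw [← Finset.mul_sum, mul_add, mul_assoc]

lemma abs_sum_sub_le_of_floor_ceil (hp : IsEquipartition p M h) (hB : 0 ≤ B)
    (hf : ∀ v, |f v| ≤ B * p v) (hG : IsSuperlevel p T G) (hκ : 0 < κ)
    (hdecay : ∀ v, κ * (v.1 + 1) ≤ -log (p v)) (hδ : 0 < δ) (hδh : δ < h) (hT : 0 ≤ T) :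
    |∑ v ∈ G, f v - ∑ k ∈ Finset.range ⌊(h + δ)⁻¹ * T⌋₊, ∑ w, f ⟨k, w⟩| ≤
      B * (∑ k ∈ Finset.range ⌈(κ⁻¹ + (h - δ)⁻¹) * T⌉₊, atypicalMass p h δ k +
        M * (⌈(h - δ)⁻¹ * T⌉₊ - ⌊(h + δ)⁻¹ * T⌋₊)) := by
  have hadd : 0 < h + δ := add_pos hp.entropy_pos hδ
  have hsub : 0 < h - δ := sub_pos.2 hδh
  have hle : (h + δ)⁻¹ * T ≤ (h - δ)⁻¹ * T := by gcongr; linarith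
  refine hp.abs_sum_sub_le hB hf hG hκ hdecay hδ hδh ((Nat.floor_le_ceil _).trans
    (Nat.ceil_mono hle)) (Nat.ceil_mono ?_) ?_ ?_ ?_
  · exact mul_le_mul_of_nonneg_right (le_add_of_nonneg_left (by positivity)) hT
  · rw [← le_div_iff₀ hadd, div_eq_inv_mul]
    exact Nat.floor_le (by positivity)
  · rw [← div_le_iff₀ hsub, div_eq_inv_mul]
    exact Nat.le_ceil _
  · rw [← div_le_iff₀' hκ, div_eq_inv_mul]
    refine le_trans ?_ (Nat.le_ceil _)
    exact mul_le_mul_of_nonneg_right (le_add_of_nonneg_right (by positivity)) hT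

variable {ι : Type*} {l : Filter ι} {S : ι → ℝ} {F : ι → Finset (Σ k, W k)}

lemma eventually_abs_sum_div_sub_lt (hp : IsEquipartition p M h) (hB : 0 ≤ B)
    (hf : ∀ v, |f v| ≤ B * p v)
    (hm : Tendsto (fun n : ℕ => (n : ℝ)⁻¹ * ∑ k ∈ Finset.range n, ∑ w, f ⟨k, w⟩) atTop (𝓝 m))
    (hS : Tendsto S l atTop) (hF : ∀ i, IsSuperlevel p (S i) (F i)) (hδ : 0 < δ) (hδh : δ < h)
    {ε : ℝ} (hε : |m * (h + δ)⁻¹ - m / h| + B * (M * ((h - δ)⁻¹ - (h + δ)⁻¹)) < ε) :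
    ∀ᶠ i in l, |(∑ v ∈ F i, f v) / S i - m / h| < ε := by
  obtain ⟨κ, hκ, hdecay⟩ := hp.exists_decay
  have hadd : 0 < (h + δ)⁻¹ := inv_pos.2 (add_pos hp.entropy_pos hδ)
  have hsub : 0 < (h - δ)⁻¹ := inv_pos.2 (sub_pos.2 hδh)
  have hC : 0 < κ⁻¹ + (h - δ)⁻¹ := by positivity
  set N₁ : ι → ℕ := fun i => ⌊(h + δ)⁻¹ * S i⌋₊
  set N₂ : ι → ℕ := fun i => ⌈(h - δ)⁻¹ * S i⌉₊
  set N₃ : ι → ℕ := fun i => ⌈(κ⁻¹ + (h - δ)⁻¹) * S i⌉₊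
  have hN₁ : Tendsto (fun i => (N₁ i : ℝ) / S i) l (𝓝 (h + δ)⁻¹) :=
    (tendsto_nat_floor_mul_div_atTop hadd.le).comp hS
  have hN₂ : Tendsto (fun i => (N₂ i : ℝ) / S i) l (𝓝 (h - δ)⁻¹) :=
    (tendsto_nat_ceil_mul_div_atTop hsub.le).comp hS
  have hmain : Tendsto (fun i => (∑ k ∈ Finset.range (N₁ i), ∑ w, f ⟨k, w⟩) / S i) l
      (𝓝 (m * (h + δ)⁻¹)) :=
    tendsto_sum_range_comp_div hm (tendsto_nat_floor_atTop.comp (hS.const_mul_atTop hadd)) hN₁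
  have hatyp : Tendsto (fun i => (∑ k ∈ Finset.range (N₃ i), atypicalMass p h δ k) / S i) l
      (𝓝 0) := by
    simpa using tendsto_sum_range_comp_div (hp.tendsto_atypicalMass δ hδ).cesaro
      (tendsto_nat_ceil_atTop.comp (hS.const_mul_atTop hC))
      ((tendsto_nat_ceil_mul_div_atTop hC.le).comp hS)
  have herr : Tendsto (fun i => |(∑ k ∈ Finset.range (N₁ i), ∑ w, f ⟨k, w⟩) / S i - m / h| +
      B * ((∑ k ∈ Finset.range (N₃ i), atypicalMass p h δ k) / S i +
        M * (N₂ i / S i - N₁ i / S i))) l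
      (𝓝 (|m * (h + δ)⁻¹ - m / h| + B * (M * ((h - δ)⁻¹ - (h + δ)⁻¹)))) := by
    simpa using (hmain.sub_const _).abs.add ((hatyp.add ((hN₂.sub hN₁).const_mul M)).const_mul B)
  filter_upwards [herr.eventually_lt_const hε, hS.eventually_gt_atTop 0] with i hi hSi
  refine lt_of_le_of_lt ((abs_sub_le _ _ _).trans ((add_comm _ _).trans_le
    (add_le_add_right ?_ _))) hi
  have := hp.abs_sum_sub_le_of_floor_ceil hB hf (hF i) hκ hdecay hδ hδh hSi.le
  rw [← sub_div, abs_div, abs_of_pos hSi, div_le_iff₀ hSi]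
  rwa [← sub_div, ← mul_div_assoc, ← add_div, mul_assoc, div_mul_cancel₀ _ hSi.ne']

theorem tendsto_sum_div (hp : IsEquipartition p M h) (hB : 0 ≤ B)
    (hf : ∀ v, |f v| ≤ B * p v)
    (hm : Tendsto (fun n : ℕ => (n : ℝ)⁻¹ * ∑ k ∈ Finset.range n, ∑ w, f ⟨k, w⟩) atTop (𝓝 m))
    (hS : Tendsto S l atTop) (hF : ∀ i, IsSuperlevel p (S i) (F i)) :
    Tendsto (fun i => (∑ v ∈ F i, f v) / S i) l (𝓝 (m / h)) := by
  refine Metric.tendsto_nhds.2 fun ε hε => ?_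
  have h0 := hp.entropy_pos.ne'
  have hlim : Tendsto (fun δ => |m * (h + δ)⁻¹ - m / h| + B * (M * ((h - δ)⁻¹ - (h + δ)⁻¹)))
      (𝓝[>] 0) (𝓝 0) := by
    refine tendsto_nhdsWithin_of_tendsto_nhds ?_
    have hcont : ContinuousAt
        (fun δ => |m * (h + δ)⁻¹ - m / h| + B * (M * ((h - δ)⁻¹ - (h + δ)⁻¹))) 0 := by
      fun_prop (disch := simpa using h0)
    simpa [div_eq_mul_inv] using hcont.tendsto
  obtain ⟨δ, hδε, hδ, hδh⟩ := ((hlim.eventually_lt_const hε).and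
    (Ioo_mem_nhdsGT hp.entropy_pos)).exists
  exact hp.eventually_abs_sum_div_sub_lt hB hf hm hS hF hδ hδh hδε

lemma tendsto_neg_log_cofinite (hp : IsEquipartition p M h) :
    Tendsto (fun v => -log (p v)) cofinite atTop := by
  obtain ⟨κ, hκ, hdecay⟩ := hp.exists_decay
  have hfst : Tendsto (Sigma.fst : (Σ k, W k) → ℕ) cofinite atTop := by
    rw [← Nat.cofinite_eq_atTop]
    refine Tendsto.cofinite_of_finite_preimage_singleton fun k => ?_
    rw [← Set.range_sigmaMk]
    exact Set.finite_range _
  exact tendsto_atTop_mono hdecay ((tendsto_atTop_add_const_right _ _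
    (tendsto_natCast_atTop_atTop.comp hfst)).const_mul_atTop hκ)

lemma isSuperlevel_map_range (hp : IsEquipartition p M h) (e : ℕ ≃ Σ k, W k)
    (hanti : Antitone fun n => p (e n)) (n : ℕ) :
    IsSuperlevel p (-log (p (e n))) ((Finset.range n).map e.toEmbedding) := by
  refine ⟨fun v hv => ?_, fun v hv => ?_⟩
  · refine Finset.mem_map.2 ⟨e.symm v, Finset.mem_range.2 (not_le.1 fun hn => hv.not_ge ?_),
      e.apply_symm_apply v⟩
    have := hanti hn
    simp only [Equiv.apply_symm_apply] at this
    exact neg_le_neg (log_le_log (hp.pos _) this)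
  · obtain ⟨j, hj, rfl⟩ := Finset.mem_map.1 hv
    exact neg_le_neg (log_le_log (hp.pos _) (hanti (Finset.mem_range.1 hj).le))

theorem tendsto_inv_log_mul_sum_range (hp : IsEquipartition p M h) (hB : 0 ≤ B)
    (hf : ∀ v, |f v| ≤ B * p v)
    (hm : Tendsto (fun n : ℕ => (n : ℝ)⁻¹ * ∑ k ∈ Finset.range n, ∑ w, f ⟨k, w⟩) atTop (𝓝 m))
    (e : ℕ ≃ Σ k, W k) (hanti : Antitone fun n => p (e n)) :
    Tendsto (fun n : ℕ => (log n)⁻¹ * ∑ k ∈ Finset.range n, f (e k)) atTop (𝓝 (m / h)) := by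
  have hT : Tendsto (fun n => -log (p (e n))) atTop atTop :=
    hp.tendsto_neg_log_cofinite.comp (Nat.cofinite_eq_atTop ▸ e.injective.tendsto_cofinite)
  have hlevel := hp.isSuperlevel_map_range e hanti
  have hmass : Tendsto (fun n : ℕ => (n : ℝ)⁻¹ * ∑ k ∈ Finset.range n, ∑ w, p ⟨k, w⟩) atTop
      (𝓝 M) := by
    simp only [hp.sum_eq]
    exact tendsto_const_nhds.cesaro
  have hcount : Tendsto (fun n : ℕ => log n / -log (p (e n))) atTop (𝓝 1) := by
    refine tendsto_log_div_neg_log (div_pos hp.mass_pos hp.entropy_pos) (fun n => hp.pos _) hanti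
      hT ?_
    simpa using hp.tendsto_sum_div one_pos.le
      (fun v => by rw [one_mul, abs_of_pos (hp.pos v)]) hmass hT hlevel
  have hsum := hp.tendsto_sum_div hB hf hm hT hlevel
  refine ((hsum.div hcount one_ne_zero).congr' ?_).trans_eq (by rw [div_one])
  filter_upwards [hT.eventually_gt_atTop 0] with n hn
  rw [Pi.div_apply, Finset.sum_map, div_div_div_cancel_right₀ hn.ne', div_eq_inv_mul]
  rfl

end IsEquipartition
end Equipartition

section Words

lemma shift_cons (q : 𝒜) (x : Omega 𝒜) : shift (cons q x) = x := rfl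

lemma concat_zero (w : Fin 0 → 𝒜) (x : Omega 𝒜) : concat w x = x := by
  funext n
  simp [concat]

lemma concat_cons {k : ℕ} (q : 𝒜) (w : Fin k → 𝒜) (x : Omega 𝒜) :
    concat (Fin.cons q w : Fin (k + 1) → 𝒜) x = cons q (concat w x) := by
  funext n
  cases n with
  | zero => simp [concat, cons]
  | succ n => by_cases h : n < k <;> simp [concat, cons, h, Fin.cons]

lemma birkhoff_succ (f : Omega 𝒜 → ℝ) (k : ℕ) (z : Omega 𝒜) :
    birkhoff f (k + 1) z = f z + birkhoff f k (shift z) := by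
  rw [birkhoff, Finset.sum_range_succ', add_comm]
  rfl

lemma birkhoff_neg (f : Omega 𝒜 → ℝ) (k : ℕ) (z : Omega 𝒜) :
    birkhoff (fun z => -f z) k z = -birkhoff f k z :=
  Finset.sum_neg_distrib _

lemma birkhoff_le {f : Omega 𝒜 → ℝ} {c : ℝ} (hf : ∀ z, f z ≤ c) (k : ℕ) (z : Omega 𝒜) :
    birkhoff f k z ≤ k * c := by
  simpa [birkhoff] using Finset.sum_le_card_nsmul (Finset.range k) _ c fun j _ => hf (shift^[j] z)

lemma abs_birkhoff_le {f : Omega 𝒜 → ℝ} {B : ℝ} (hB : ∀ z, |f z| ≤ B) (k : ℕ) (z : Omega 𝒜) :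
    |birkhoff f k z| ≤ k * B := by
  simpa [birkhoff] using (Finset.abs_sum_le_sum_abs _ _).trans
    (Finset.sum_le_card_nsmul (Finset.range k) _ B fun j _ => hB (shift^[j] z))

lemma concat_mem_cyl_iff {k : ℕ} {w w' : Fin k → 𝒜} {z : Omega 𝒜} :
    concat w' z ∈ cyl w ↔ w' = w := by
  simp [cyl, concat, funext_iff]

section Topology

lemma exists_forall_abs_le {X : Type*} [TopologicalSpace X] [CompactSpace X] {φ : X → ℝ}
    (hφ : Continuous φ) : ∃ B ≥ 0, ∀ x, |φ x| ≤ B := by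
  obtain ⟨B, hB⟩ := isCompact_univ.exists_bound_of_continuousOn hφ.continuousOn
  exact ⟨max B 0, le_max_right _ _, fun x => (hB x (mem_univ x)).trans (le_max_left _ _)⟩

variable [TopologicalSpace 𝒜]

lemma continuous_cons (q : 𝒜) : Continuous (cons q) :=
  continuous_pi fun n => n.casesOn continuous_const continuous_apply

lemma continuous_shift : Continuous (shift (𝒜 := 𝒜)) :=
  continuous_pi fun n => continuous_apply (n + 1)

lemma continuous_concat {k : ℕ} (w : Fin k → 𝒜) : Continuous (concat w) := by
  refine continuous_pi fun n => ?_
  by_cases h : n < k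
  · simp only [concat, h, dif_pos, continuous_const]
  · simp only [concat, h, dif_neg, not_false_eq_true, continuous_apply]

lemma continuous_birkhoff {f : Omega 𝒜 → ℝ} (hf : Continuous f) (k : ℕ) :
    Continuous (birkhoff f k) :=
  continuous_finsetSum _ fun j _ => hf.comp (continuous_shift.iterate j)

lemma continuous_exp_birkhoff_concat {f : Omega 𝒜 → ℝ} (hf : Continuous f) {k : ℕ}
    (w : Fin k → 𝒜) :
    Continuous fun z => exp (birkhoff f k (concat w z)) :=
  continuous_exp.comp ((continuous_birkhoff hf k).comp (continuous_concat w))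

variable [DiscreteTopology 𝒜]

lemma isClopen_cyl {k : ℕ} (w : Fin k → 𝒜) : IsClopen (cyl w) := by
  have : cyl w = ⋂ i : Fin k, (fun x : Omega 𝒜 => x i) ⁻¹' {w i} := by
    ext x
    simp [cyl]
  rw [this]
  exact isClopen_iInter_of_finite fun i => (isClopen_discrete _).preimage (continuous_apply _)

variable [Finite 𝒜]

lemma exists_forall_abs_sub_le {φ : Omega 𝒜 → ℝ} (hφ : Continuous φ) {ε : ℝ} (hε : 0 < ε) :
    ∃ N : ℕ, ∀ x z : Omega 𝒜, (∀ i < N, x i = z i) → |φ x - φ z| ≤ ε := by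
  let _ : MetricSpace (Omega 𝒜) := PiNat.metricSpace
  obtain ⟨δ, hδ, hunif⟩ := Metric.uniformContinuous_iff.1
    (CompactSpace.uniformContinuous_of_continuous hφ) ε hε
  obtain ⟨N, hN⟩ := exists_pow_lt_of_lt_one hδ one_half_lt_one
  exact ⟨N, fun x z hxz => (hunif ((PiNat.mem_cylinder_iff_dist_le.1 hxz).trans_lt hN)).le⟩

lemma exists_forall_concat_abs_sub_le {φ : Omega 𝒜 → ℝ} (hφ : Continuous φ) {ε : ℝ}
    (hε : 0 < ε) : ∃ N : ℕ, ∀ k ≥ N, ∀ (w : Fin k → 𝒜) (x z : Omega 𝒜),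
      |φ (concat w x) - φ (concat w z)| ≤ ε := by
  obtain ⟨N, hN⟩ := exists_forall_abs_sub_le hφ hε
  exact ⟨N, fun k hk w x z => hN _ _ fun i hi => by simp [concat, hi.trans_le hk]⟩

lemma exists_abs_birkhoff_concat_sub_le {f : Omega 𝒜 → ℝ} (hf : Continuous f) {ε : ℝ}
    (hε : 0 < ε) : ∃ C : ℝ, ∀ (n : ℕ) (w : Fin n → 𝒜) (x z : Omega 𝒜),
      |birkhoff f n (concat w x) - birkhoff f n (concat w z)| ≤ C + n * ε := by
  obtain ⟨N, hN⟩ := exists_forall_concat_abs_sub_le hf hε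
  obtain ⟨B, hB0, hB⟩ := exists_forall_abs_le hf
  have hshort : ∀ n ≤ N, ∀ (w : Fin n → 𝒜) (x z : Omega 𝒜),
      |birkhoff f n (concat w x) - birkhoff f n (concat w z)| ≤ 2 * (N * B) + n * ε := by
    intro n hn w x z
    have hbound : ∀ y, |birkhoff f n y| ≤ N * B := fun y =>
      (abs_birkhoff_le hB n y).trans (by gcongr)
    have := abs_sub (birkhoff f n (concat w x)) (birkhoff f n (concat w z))
    linarith [hbound (concat w x), hbound (concat w z), mul_nonneg n.cast_nonneg hε.le]
  refine ⟨2 * (N * B), fun n => ?_⟩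
  obtain hn | hn := le_total n N
  · exact hshort n hn
  induction n, hn using Nat.le_induction with
  | base => exact hshort N le_rfl
  | succ n hn ih =>
    intro w x z
    have hhead := hN (n + 1) (by omega) w x z
    obtain ⟨q, v, rfl⟩ : ∃ q v, w = (Fin.cons q v : Fin (n + 1) → 𝒜) :=
      ⟨w 0, Fin.tail w, (Fin.cons_self_tail w).symm⟩
    rw [concat_cons, concat_cons] at hhead ⊢
    rw [birkhoff_succ, birkhoff_succ, shift_cons, shift_cons, add_sub_add_comm]
    push_cast
    linarith [abs_add_le (f (cons q (concat v x)) - f (cons q (concat v z)))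
      (birkhoff f n (concat v x) - birkhoff f n (concat v z)), ih v x z]

end Topology
end Words

section TransferOperator

variable [Fintype 𝒜] {f : Omega 𝒜 → ℝ}

/-- `f` is a normalized potential, i.e. `exp ∘ f` satisfies the summation condition of a
`g`-function; equivalently, `ruelle f` fixes the constants. -/
def IsNormalized (f : Omega 𝒜 → ℝ) : Prop :=
  ∀ x, ∑ q : 𝒜, exp (f (cons q x)) = 1

lemma ruelle_iterate_apply (φ : Omega 𝒜 → ℝ) (k : ℕ) (x : Omega 𝒜) :
    (ruelle f)^[k] φ x =
      ∑ w : Fin k → 𝒜, exp (birkhoff f k (concat w x)) * φ (concat w x) := by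
  induction k generalizing φ with
  | zero => simp [birkhoff, concat_zero]
  | succ k ih =>
    rw [Function.iterate_succ_apply, ih, ← (Fin.consEquiv fun _ : Fin (k + 1) => 𝒜).sum_comp,
      Fintype.sum_prod_type_right]
    refine Finset.sum_congr rfl fun w _ => ?_
    simp only [ruelle, Finset.mul_sum, smul_eq_mul]
    refine Finset.sum_congr rfl fun q _ => ?_
    change _ = exp (birkhoff f (k + 1) (concat (Fin.cons q w : Fin (k + 1) → 𝒜) x)) *
      φ (concat (Fin.cons q w : Fin (k + 1) → 𝒜) x)
    rw [concat_cons, birkhoff_succ, shift_cons, exp_add]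
    ring

lemma ruelle_mono : Monotone (ruelle f : (Omega 𝒜 → ℝ) → Omega 𝒜 → ℝ) := fun _ _ hφψ _ =>
  Finset.sum_le_sum fun _ _ => mul_le_mul_of_nonneg_left (hφψ _) (exp_pos _).le

lemma ruelle_add (φ ψ : Omega 𝒜 → ℝ) : ruelle f (φ + ψ) = ruelle f φ + ruelle f ψ := by
  funext x
  simp [ruelle, mul_add, Finset.sum_add_distrib]

lemma ruelle_smul (c : ℝ) (φ : Omega 𝒜 → ℝ) : ruelle f (c • φ) = c • ruelle f φ := by
  funext x
  simp [ruelle, Finset.mul_sum, mul_left_comm]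

lemma ruelle_mul_comp_shift (φ g : Omega 𝒜 → ℝ) :
    ruelle f (φ * g ∘ shift) = ruelle f φ * g := by
  funext x
  simp [ruelle, shift_cons, Finset.sum_mul, mul_assoc]

lemma IsNormalized.ruelle_const (hf : IsNormalized f) (c : ℝ) :
    ruelle f (fun _ => c) = fun _ => c := by
  funext x
  simp [ruelle, ← Finset.sum_mul, hf x]

lemma IsNormalized.ruelle_comp_shift (hf : IsNormalized f) (g : Omega 𝒜 → ℝ) :
    ruelle f (g ∘ shift) = g := by
  have hone : ruelle f (1 : Omega 𝒜 → ℝ) = 1 := hf.ruelle_const 1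
  rw [← one_mul (g ∘ shift), ruelle_mul_comp_shift, hone, one_mul]

lemma IsNormalized.sum_exp_birkhoff (hf : IsNormalized f) (k : ℕ) (x : Omega 𝒜) :
    ∑ w : Fin k → 𝒜, exp (birkhoff f k (concat w x)) = 1 := by
  simpa [Function.iterate_fixed (hf.ruelle_const 1)] using
    (ruelle_iterate_apply (f := f) (fun _ => 1) k x).symm

variable [TopologicalSpace 𝒜]

lemma continuous_ruelle {φ : Omega 𝒜 → ℝ} (hf : Continuous f) (hφ : Continuous φ) :
    Continuous (ruelle f φ) :=
  continuous_finsetSum _ fun q _ =>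
    (continuous_exp.comp (hf.comp (continuous_cons q))).smul (hφ.comp (continuous_cons q))

end TransferOperator

section Duality

lemma nonneg_and_nonpos_of_forall_lt_mul {a C : ℝ} (h : ∀ r > 0, C < r * a) : 0 ≤ a ∧ C ≤ 0 := by
  refine ⟨not_lt.1 fun ha => ?_, not_lt.1 fun hC => ?_⟩
  · have := h (max 1 (C / a)) (lt_max_of_lt_left one_pos)
    have := mul_le_mul_of_nonpos_right (le_max_right 1 (C / a)) ha.le
    rw [div_mul_cancel₀ _ ha.ne] at this
    linarith
  · have ha : 0 < a := hC.trans (by simpa using h 1 one_pos)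
    have := h (C / a) (div_pos hC ha)
    rw [div_mul_cancel₀ _ ha.ne'] at this
    exact this.false

variable {X : Type*} [TopologicalSpace X]

/-- The cone of the continuous functions that become positive upon adding a coboundary `ψ - T ψ`. -/
def coboundaryCone (T : C(X, ℝ) →ₗ[ℝ] C(X, ℝ)) : ConvexCone ℝ C(X, ℝ) where
  carrier := {v | ∃ ψ : C(X, ℝ), ∀ x, 0 < v x + (ψ x - T ψ x)}
  smul_mem' := by
    rintro r hr v ⟨ψ, hψ⟩
    refine ⟨r • ψ, fun x => ?_⟩
    simpa [mul_add, mul_sub] using mul_pos hr (hψ x)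
  add_mem' := by
    rintro v ⟨ψ, hψ⟩ v' ⟨ψ', hψ'⟩
    refine ⟨ψ + ψ', fun x => ?_⟩
    simp only [map_add, ContinuousMap.add_apply]
    linarith [hψ x, hψ' x]

variable {T : C(X, ℝ) →ₗ[ℝ] C(X, ℝ)}

lemma mem_coboundaryCone {v : C(X, ℝ)} :
    v ∈ coboundaryCone T ↔ ∃ ψ : C(X, ℝ), ∀ x, 0 < v x + (ψ x - T ψ x) := Iff.rfl

lemma mem_coboundaryCone_of_pos {v : C(X, ℝ)} (hv : ∀ x, 0 < v x) : v ∈ coboundaryCone T :=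
  mem_coboundaryCone.2 ⟨0, by simpa using hv⟩

lemma one_add_sub_mem_coboundaryCone (ψ : C(X, ℝ)) : 1 + (ψ - T ψ) ∈ coboundaryCone T :=
  mem_coboundaryCone.2 ⟨-ψ, fun x => by
    simp [add_assoc, sub_eq_add_neg, add_comm (ψ x)]⟩

lemma nonneg_of_nonneg_on_coboundaryCone {Λ : C(X, ℝ) →ₗ[ℝ] ℝ}
    (hΛ : ∀ v ∈ coboundaryCone T, 0 ≤ Λ v) {φ : C(X, ℝ)} (hφ : 0 ≤ φ) : 0 ≤ Λ φ := by
  have hlim : Tendsto (fun ε => Λ φ + ε * Λ 1) (𝓝[>] 0) (𝓝 (Λ φ)) := by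
    refine tendsto_nhdsWithin_of_tendsto_nhds ?_
    have hcont : Continuous fun ε => Λ φ + ε * Λ 1 := by fun_prop
    simpa using hcont.tendsto 0
  refine ge_of_tendsto hlim (eventually_mem_nhdsWithin.mono fun ε hε => ?_)
  have := hΛ _ (mem_coboundaryCone_of_pos (v := φ + ε • (1 : C(X, ℝ))) fun x =>
    add_pos_of_nonneg_of_pos (hφ x) (by simpa using hε))
  simpa using this

lemma map_eq_of_nonneg_on_coboundaryCone {Λ : C(X, ℝ) →ₗ[ℝ] ℝ}
    (hΛ : ∀ v ∈ coboundaryCone T, 0 ≤ Λ v) (ψ : C(X, ℝ)) : Λ (T ψ) = Λ ψ := by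
  have h : ∀ r : ℝ, 0 ≤ Λ 1 + r * (Λ ψ - Λ (T ψ)) := fun r => by
    simpa [← mul_sub] using hΛ _ (one_add_sub_mem_coboundaryCone (r • ψ))
  by_contra hne
  have hsub : Λ ψ - Λ (T ψ) ≠ 0 := sub_ne_zero.2 (Ne.symm hne)
  have := h (-(Λ 1 + 1) / (Λ ψ - Λ (T ψ)))
  rw [div_mul_cancel₀ _ hsub] at this
  linarith

variable [CompactSpace X]

lemma isOpen_coboundaryCone : IsOpen (coboundaryCone T : Set C(X, ℝ)) := by
  have : (coboundaryCone T : Set C(X, ℝ)) =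
      ⋃ ψ : C(X, ℝ), (fun v => v + (ψ - T ψ)) ⁻¹' {v | MapsTo v univ (Ioi 0)} := by
    ext v
    simp [mem_coboundaryCone, MapsTo]
  rw [this]
  exact isOpen_iUnion fun ψ => (ContinuousMap.isOpen_setOfPred_mapsTo isCompact_univ
    isOpen_Ioi).preimage (continuous_id.add continuous_const)

lemma exists_add_const_mem_coboundaryCone (v : C(X, ℝ)) :
    ∃ r : ℝ, v + r • (1 : C(X, ℝ)) ∈ coboundaryCone T := by
  refine ⟨‖v‖ + 1, mem_coboundaryCone_of_pos fun x => ?_⟩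
  have := (abs_le.1 (v.norm_coe_le_norm x)).1
  simp only [ContinuousMap.add_apply, ContinuousMap.smul_apply, ContinuousMap.one_apply,
    smul_eq_mul, mul_one]
  linarith

lemma exists_separating_functional {g : C(X, ℝ)} (hg : g ∉ coboundaryCone T) :
    ∃ Λ : C(X, ℝ) →ₗ[ℝ] ℝ, 0 < Λ 1 ∧ (∀ v ∈ coboundaryCone T, 0 ≤ Λ v) ∧ Λ g ≤ 0 := by
  obtain ⟨Λ, hΛ⟩ := geometric_hahn_banach_point_open (coboundaryCone T).convex
    isOpen_coboundaryCone hg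
  have hsep : ∀ v ∈ coboundaryCone T, 0 ≤ Λ v ∧ Λ g ≤ 0 := fun v hv =>
    nonneg_and_nonpos_of_forall_lt_mul fun r hr => by
      simpa using hΛ _ ((coboundaryCone T).smul_mem hr hv)
  have hone : (1 : C(X, ℝ)) ∈ coboundaryCone T := mem_coboundaryCone_of_pos fun _ => one_pos
  refine ⟨Λ, (hsep 1 hone).1.lt_of_ne fun h0 => ?_, fun v hv => (hsep v hv).1, (hsep 1 hone).2⟩
  obtain ⟨r, hr⟩ := exists_add_const_mem_coboundaryCone (T := T) g
  have := (hsep _ hr).1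
  rw [map_add, map_smul, ← h0, smul_zero, add_zero] at this
  have := hΛ 1 hone
  linarith

open scoped CompactlySupported

variable [T2Space X] [MeasurableSpace X] [BorelSpace X]

lemma exists_isProbabilityMeasure_integral_eq (Λ : C(X, ℝ) →ₗ[ℝ] ℝ) (hΛ : ∀ φ, 0 ≤ φ → 0 ≤ Λ φ)
    (hone : Λ 1 = 1) :
    ∃ ν : Measure X, IsProbabilityMeasure ν ∧ ∀ φ : C(X, ℝ), ∫ x, φ x ∂ν = Λ φ := by
  let Λc : C_c(X, ℝ) →ₚ[ℝ] ℝ := PositiveLinearMap.mk₀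
    { toFun := fun φ => Λ φ.toContinuousMap
      map_add' := fun φ ψ => Λ.map_add φ.toContinuousMap ψ.toContinuousMap
      map_smul' := fun r φ => Λ.map_smul r φ.toContinuousMap } fun φ hφ => hΛ _ hφ
  have hint : ∀ φ : C(X, ℝ), ∫ x, φ x ∂(RealRMK.rieszMeasure Λc) = Λ φ := fun φ =>
    RealRMK.integral_rieszMeasure Λc ⟨φ, HasCompactSupport.of_compactSpace _⟩
  refine ⟨RealRMK.rieszMeasure Λc, ⟨?_⟩, hint⟩
  have := hint 1
  simp only [ContinuousMap.one_apply, integral_const, smul_eq_mul, mul_one, hone] at this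
  rwa [← ENNReal.toReal_eq_one_iff]

theorem exists_lt_add_sub_of_forall_integral_lt (T : C(X, ℝ) →ₗ[ℝ] C(X, ℝ)) {φ : C(X, ℝ)} {c : ℝ}
    (h : ∀ ν : Measure X, IsProbabilityMeasure ν →
      (∀ ψ : C(X, ℝ), ∫ x, T ψ x ∂ν = ∫ x, ψ x ∂ν) → ∫ x, φ x ∂ν < c) :
    ∃ ψ : C(X, ℝ), ∀ x, φ x < c + (ψ x - T ψ x) := by
  suffices c • (1 : C(X, ℝ)) - φ ∈ coboundaryCone T by
    obtain ⟨ψ, hψ⟩ := mem_coboundaryCone.1 this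
    refine ⟨ψ, fun x => ?_⟩
    have := hψ x
    simp only [ContinuousMap.sub_apply, ContinuousMap.smul_apply, ContinuousMap.one_apply,
      smul_eq_mul, mul_one] at this
    linarith
  by_contra hnot
  obtain ⟨Λ, hpos, hΛ, hle⟩ := exists_separating_functional hnot
  obtain ⟨ν, hν, hint⟩ := exists_isProbabilityMeasure_integral_eq ((Λ 1)⁻¹ • Λ)
    (fun φ hφ => mul_nonneg (inv_nonneg.2 hpos.le) (nonneg_of_nonneg_on_coboundaryCone hΛ hφ))
    (inv_mul_cancel₀ hpos.ne')
  have hlt := h ν hν fun ψ => by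
    simp only [hint, LinearMap.smul_apply, map_eq_of_nonneg_on_coboundaryCone hΛ ψ]
  rw [hint, LinearMap.smul_apply, smul_eq_mul, inv_mul_lt_iff₀ hpos] at hlt
  rw [map_sub, map_smul, smul_eq_mul] at hle
  linarith

end Duality

section InvariantMeasure

lemma integrable_of_continuous {X : Type*} [TopologicalSpace X] [CompactSpace X]
    [MeasurableSpace X] [OpensMeasurableSpace X] {ν : Measure X} [IsFiniteMeasureOnCompacts ν]
    {φ : X → ℝ} (hφ : Continuous φ) : Integrable φ ν :=
  hφ.integrable_of_hasCompactSupport (.of_compactSpace φ)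

variable [Fintype 𝒜] [TopologicalSpace 𝒜] [MeasurableSpace 𝒜] {f φ : Omega 𝒜 → ℝ}
  {ν : Measure (Omega 𝒜)}

/-- `ν` is a probability measure fixed by the dual of the transfer operator of `f`, tested against
real continuous functions. -/
structure IsRuelleInvariant (f : Omega 𝒜 → ℝ) (ν : Measure (Omega 𝒜)) : Prop where
  isProbabilityMeasure : IsProbabilityMeasure ν
  integral_ruelle : ∀ φ : Omega 𝒜 → ℝ, Continuous φ → ∫ z, ruelle f φ z ∂ν = ∫ z, φ z ∂ν

/-- The transfer operator of `f` as a linear endomorphism of the continuous functions. -/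
noncomputable def ruelleLinearMap (hf : Continuous f) : C(Omega 𝒜, ℝ) →ₗ[ℝ] C(Omega 𝒜, ℝ) where
  toFun φ := ⟨ruelle f φ, continuous_ruelle hf φ.continuous⟩
  map_add' φ ψ := ContinuousMap.ext (congrFun (ruelle_add φ ψ))
  map_smul' c φ := ContinuousMap.ext (congrFun (ruelle_smul c φ))

lemma IsRuelleInvariant.integral_ruelle_iterate (hν : IsRuelleInvariant f ν) (hf : Continuous f)
    (hφ : Continuous φ) (k : ℕ) : ∫ z, (ruelle f)^[k] φ z ∂ν = ∫ z, φ z ∂ν := by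
  induction k generalizing φ with
  | zero => rfl
  | succ k ih =>
    rw [Function.iterate_succ, Function.comp_apply, ih (continuous_ruelle hf hφ),
      hν.integral_ruelle φ hφ]

lemma IsRuelleInvariant.integral_comp_shift (hν : IsRuelleInvariant f ν) (hnorm : IsNormalized f)
    (hφ : Continuous φ) : ∫ z, φ (shift z) ∂ν = ∫ z, φ z ∂ν := by
  have := hν.integral_ruelle (φ ∘ shift) (hφ.comp continuous_shift)
  rw [hnorm.ruelle_comp_shift] at this
  exact this.symm

variable [DiscreteTopology 𝒜] [BorelSpace 𝒜]

lemma exists_continuous_forall_lt (hf : Continuous f) {μ : Measure (Omega 𝒜)}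
    (huniq : ∀ ν, IsRuelleInvariant f ν → ν = μ) {φ : Omega 𝒜 → ℝ} (hφ : Continuous φ) {c : ℝ}
    (hc : ∫ z, φ z ∂μ < c) :
    ∃ ψ : Omega 𝒜 → ℝ, Continuous ψ ∧ ∀ z, φ z < c + (ψ z - ruelle f ψ z) := by
  obtain ⟨ψ, hψ⟩ := exists_lt_add_sub_of_forall_integral_lt (ruelleLinearMap hf) (φ := ⟨φ, hφ⟩)
    (c := c) fun ν hν hinv => by
      rw [huniq ν ⟨hν, fun ψ hψ => hinv ⟨ψ, hψ⟩⟩]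
      exact hc
  exact ⟨ψ, ψ.continuous, hψ⟩

end InvariantMeasure

section LimitTheorems

variable [Fintype 𝒜] {f φ ψ : Omega 𝒜 → ℝ} {B c : ℝ}

lemma ruelle_iterate_add_le (hf : IsNormalized f) (h : ∀ z, φ z ≤ c + (ψ z - ruelle f ψ z))
    (k : ℕ) (x : Omega 𝒜) :
    (ruelle f)^[k] φ x + (ruelle f)^[k + 1] ψ x ≤ c + (ruelle f)^[k] ψ x := by
  have hstep : φ + ruelle f ψ ≤ (fun _ => c) + ψ := fun z => by
    simp only [Pi.add_apply]
    linarith [h z]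
  induction k generalizing x with
  | zero => exact hstep x
  | succ k ih =>
    have := ruelle_mono (f := f) (show _ + _ ≤ (fun _ => c) + _ from ih) x
    rw [ruelle_add, ruelle_add, hf.ruelle_const] at this
    simpa only [Function.iterate_succ_apply', Pi.add_apply] using this

lemma IsNormalized.abs_ruelle_iterate_le (hf : IsNormalized f) (hψ : ∀ z, |ψ z| ≤ B) (k : ℕ)
    (x : Omega 𝒜) : |(ruelle f)^[k] ψ x| ≤ B := by
  have hmono := (ruelle_mono (f := f)).iterate k
  have hfix : ∀ r : ℝ, (ruelle f)^[k] (fun _ => r) = fun _ => r := fun r =>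
    Function.iterate_fixed (hf.ruelle_const r) k
  refine abs_le.2 ⟨?_, ?_⟩
  · simpa only [hfix] using hmono (show (fun _ => -B) ≤ ψ from fun z => (abs_le.1 (hψ z)).1) x
  · simpa only [hfix] using hmono (show ψ ≤ fun _ => B from fun z => (abs_le.1 (hψ z)).2) x

lemma sum_range_ruelle_iterate_le (hf : IsNormalized f) (hψ : ∀ z, |ψ z| ≤ B)
    (h : ∀ z, φ z ≤ c + (ψ z - ruelle f ψ z)) (n : ℕ) (x : Omega 𝒜) :
    ∑ k ∈ Finset.range n, (ruelle f)^[k] φ x ≤ n * c + 2 * B :=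
  calc ∑ k ∈ Finset.range n, (ruelle f)^[k] φ x
      ≤ ∑ k ∈ Finset.range n, (c + ((ruelle f)^[k] ψ x - (ruelle f)^[k + 1] ψ x)) :=
        Finset.sum_le_sum fun k _ => by linarith [ruelle_iterate_add_le hf h k x]
    _ = n * c + (ψ x - (ruelle f)^[n] ψ x) := by
        rw [Finset.sum_add_distrib, Finset.sum_range_sub' (fun k => (ruelle f)^[k] ψ x)]
        simp
    _ ≤ n * c + 2 * B := by
        linarith [le_abs_self (ψ x), hψ x, (abs_le.1 (hf.abs_ruelle_iterate_le hψ n x)).1]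

lemma birkhoff_le_of_le_add_sub (h : ∀ z, φ z ≤ c + (ψ z - ruelle f ψ z)) (k : ℕ) (z : Omega 𝒜) :
    birkhoff φ k z ≤ k * c + birkhoff (fun z => ψ z - ruelle f ψ (shift z)) k z +
      (ruelle f ψ (shift^[k] z) - ruelle f ψ z) := by
  induction k generalizing z with
  | zero => simp [birkhoff]
  | succ k ih =>
    rw [birkhoff_succ, birkhoff_succ, Function.iterate_succ_apply]
    push_cast
    linarith [h z, ih (shift z)]

lemma IsNormalized.ruelle_sub_comp_shift (hf : IsNormalized f) (ψ : Omega 𝒜 → ℝ) :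
    ruelle f (fun z => ψ z - ruelle f ψ (shift z)) = 0 := by
  have : (fun z => ψ z - ruelle f ψ (shift z)) = ψ + ((-1 : ℝ) • ruelle f ψ) ∘ shift := by
    funext z
    simp [sub_eq_add_neg]
  rw [this, ruelle_add, hf.ruelle_comp_shift]
  simp

lemma IsNormalized.ruelle_add_comp_shift_sq (hf : IsNormalized f) {d : Omega 𝒜 → ℝ}
    (hd : ruelle f d = 0) (g : Omega 𝒜 → ℝ) :
    ruelle f ((d + g ∘ shift) ^ 2) = ruelle f (d ^ 2) + g ^ 2 := by
  have : (d + g ∘ shift) ^ 2 = d ^ 2 + d * ((2 : ℝ) • g) ∘ shift + (g ^ 2) ∘ shift := by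
    funext z
    simp only [Pi.pow_apply, Pi.add_apply, Pi.mul_apply, Pi.smul_apply, Function.comp_apply,
      smul_eq_mul]
    ring
  rw [this, ruelle_add, ruelle_add, ruelle_mul_comp_shift, hf.ruelle_comp_shift, hd]
  simp

-- Under the weights of `ruelle f`, the summands of `birkhoff d` are martingale differences.
lemma IsNormalized.ruelle_iterate_birkhoff_sq_le (hf : IsNormalized f) {d : Omega 𝒜 → ℝ}
    (hd : ruelle f d = 0) (hB : ∀ z, |d z| ≤ B) (k : ℕ) (x : Omega 𝒜) :
    (ruelle f)^[k] (birkhoff d k ^ 2) x ≤ k * B ^ 2 := by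
  induction k generalizing x with
  | zero => simp [birkhoff]
  | succ k ih =>
    have hsq : ruelle f (d ^ 2) ≤ fun _ => B ^ 2 := by
      rw [← hf.ruelle_const (B ^ 2)]
      exact ruelle_mono fun z => sq_le_sq.2 ((hB z).trans (le_abs_self B))
    have hadd : Function.Commute (ruelle f) fun g => (fun _ => B ^ 2) + g := fun g => by
      rw [ruelle_add, hf.ruelle_const]
    have hsucc : birkhoff d (k + 1) = d + birkhoff d k ∘ shift := funext (birkhoff_succ d k)
    calc (ruelle f)^[k + 1] (birkhoff d (k + 1) ^ 2) x
        = (ruelle f)^[k] (ruelle f (d ^ 2) + birkhoff d k ^ 2) x := by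
          rw [Function.iterate_succ_apply, hsucc, hf.ruelle_add_comp_shift_sq hd]
      _ ≤ (ruelle f)^[k] ((fun _ => B ^ 2) + birkhoff d k ^ 2) x :=
          ruelle_mono.iterate k (add_le_add_left hsq _) x
      _ = B ^ 2 + (ruelle f)^[k] (birkhoff d k ^ 2) x :=
          congrFun ((hadd.iterate_left k) (birkhoff d k ^ 2)) x
      _ ≤ (k + 1 : ℕ) * B ^ 2 := by
          push_cast
          linarith [ih x]

lemma sq_mul_sum_filter_le (φ : Omega 𝒜 → ℝ) {t : ℝ} (k : ℕ) (x : Omega 𝒜)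
    {s : Finset (Fin k → 𝒜)} (hs : ∀ w ∈ s, t ≤ |φ (concat w x)|) (ht : 0 ≤ t) :
    t ^ 2 * ∑ w ∈ s, exp (birkhoff f k (concat w x)) ≤ (ruelle f)^[k] (φ ^ 2) x := by
  rw [ruelle_iterate_apply, Finset.mul_sum]
  refine (Finset.sum_le_sum fun w hw => ?_).trans
    (Finset.sum_le_univ_sum_of_nonneg fun w => mul_nonneg (exp_pos _).le (sq_nonneg _))
  rw [mul_comm]
  exact mul_le_mul_of_nonneg_left (sq_le_sq.2 ((abs_of_nonneg ht).trans_le (hs w hw)))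
    (exp_pos _).le

lemma sum_filter_birkhoff_le (hf : IsNormalized f) (hψ : ∀ z, |ψ z| ≤ B)
    (h : ∀ z, φ z ≤ c + (ψ z - ruelle f ψ z)) {η : ℝ} (hη : 0 < η) {k : ℕ} (hk : 2 * B ≤ k * η)
    (hk0 : 0 < k) (x : Omega 𝒜) {s : Finset (Fin k → 𝒜)}
    (hs : ∀ w ∈ s, k * (c + 2 * η) ≤ birkhoff φ k (concat w x)) :
    ∑ w ∈ s, exp (birkhoff f k (concat w x)) ≤ (2 * B / η) ^ 2 / k := by
  set d : Omega 𝒜 → ℝ := fun z => ψ z - ruelle f ψ (shift z)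
  have hLψ : ∀ z, |ruelle f ψ z| ≤ B := hf.abs_ruelle_iterate_le hψ 1
  have hd : ∀ z, |d z| ≤ 2 * B := fun z => by
    linarith [abs_sub (ψ z) (ruelle f ψ (shift z)), hψ z, hLψ (shift z)]
  have hlarge : ∀ w ∈ s, k * η ≤ |birkhoff d k (concat w x)| := fun w hw => by
    have := birkhoff_le_of_le_add_sub h k (concat w x)
    linarith [hs w hw, le_abs_self (birkhoff d k (concat w x)),
      (abs_le.1 (hLψ (shift^[k] (concat w x)))).2, (abs_le.1 (hLψ (concat w x))).1]
  have hk' : (0 : ℝ) < k := by exact_mod_cast hk0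
  have := (sq_mul_sum_filter_le (f := f) (birkhoff d k) k x hlarge (by positivity)).trans
    (hf.ruelle_iterate_birkhoff_sq_le (hf.ruelle_sub_comp_shift ψ) hd k x)
  rw [div_pow, div_div, le_div_iff₀ (by positivity)]
  nlinarith

end LimitTheorems

section UniqueInvariantMeasure

variable [Fintype 𝒜] [TopologicalSpace 𝒜] [DiscreteTopology 𝒜] [MeasurableSpace 𝒜]
  [BorelSpace 𝒜] {f φ : Omega 𝒜 → ℝ} {c : ℝ} {μ : Measure (Omega 𝒜)}

lemma eventually_sum_range_ruelle_iterate_lt (hf : IsNormalized f) (hcont : Continuous f)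
    (huniq : ∀ ν, IsRuelleInvariant f ν → ν = μ) (hφ : Continuous φ) (hc : ∫ z, φ z ∂μ < c)
    (x : Omega 𝒜) :
    ∀ᶠ n : ℕ in atTop, (n : ℝ)⁻¹ * ∑ k ∈ Finset.range n, (ruelle f)^[k] φ x < c := by
  obtain ⟨c₀, hφc₀, hc₀⟩ := exists_between hc
  obtain ⟨ψ, hψ, hlt⟩ := exists_continuous_forall_lt hcont huniq hφ hφc₀
  obtain ⟨B, -, hB⟩ := exists_forall_abs_le hψ
  have hlim : Tendsto (fun n : ℕ => c₀ + 2 * B / n) atTop (𝓝 c₀) := by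
    simpa using (tendsto_const_div_atTop_nhds_zero_nat (2 * B)).const_add c₀
  filter_upwards [hlim.eventually_lt_const hc₀, eventually_gt_atTop 0] with n hn hn0
  have hn' : (0 : ℝ) < n := by exact_mod_cast hn0
  refine lt_of_le_of_lt ?_ hn
  rw [inv_mul_le_iff₀ hn', mul_add, mul_div_cancel₀ _ hn'.ne']
  exact sum_range_ruelle_iterate_le hf hB (fun z => (hlt z).le) n x

theorem tendsto_inv_mul_sum_range_ruelle_iterate (hf : IsNormalized f) (hcont : Continuous f)
    (huniq : ∀ ν, IsRuelleInvariant f ν → ν = μ) (hφ : Continuous φ) (x : Omega 𝒜) :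
    Tendsto (fun n : ℕ => (n : ℝ)⁻¹ * ∑ k ∈ Finset.range n, (ruelle f)^[k] φ x) atTop
      (𝓝 (∫ z, φ z ∂μ)) := by
  refine tendsto_order.2 ⟨fun c hc => ?_,
    fun c hc => eventually_sum_range_ruelle_iterate_lt hf hcont huniq hφ hc x⟩
  have hneg : ∫ z, -φ z ∂μ < -c := by rw [integral_neg]; exact neg_lt_neg hc
  filter_upwards [eventually_sum_range_ruelle_iterate_lt (φ := fun z => -φ z) hf hcont huniq hφ.neg
    hneg x] with n hn
  have : ∀ k, (ruelle f)^[k] (fun z => -φ z) x = -(ruelle f)^[k] φ x := fun k => by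
    simp [ruelle_iterate_apply]
  simp only [this, Finset.sum_neg_distrib, mul_neg] at hn
  exact neg_lt_neg_iff.1 hn

theorem tendsto_sum_filter_le_birkhoff (hf : IsNormalized f) (hcont : Continuous f)
    (huniq : ∀ ν, IsRuelleInvariant f ν → ν = μ) (hφ : Continuous φ) (hc : ∫ z, φ z ∂μ < c)
    (x : Omega 𝒜) :
    Tendsto (fun k : ℕ => ∑ w : Fin k → 𝒜 with k * c ≤ birkhoff φ k (concat w x),
      exp (birkhoff f k (concat w x))) atTop (𝓝 0) := by
  obtain ⟨c₀, hφc₀, hc₀⟩ := exists_between hc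
  obtain ⟨ψ, hψ, hlt⟩ := exists_continuous_forall_lt hcont huniq hφ hφc₀
  obtain ⟨B, -, hB⟩ := exists_forall_abs_le hψ
  set η := (c - c₀) / 2
  have hη : 0 < η := half_pos (sub_pos.2 hc₀)
  have hlarge : ∀ᶠ k : ℕ in atTop, 2 * B ≤ k * η :=
    (tendsto_natCast_atTop_atTop.atTop_mul_const hη).eventually_ge_atTop _
  refine squeeze_zero' (.of_forall fun k => Finset.sum_nonneg fun w _ => (exp_pos _).le) ?_
    (tendsto_const_div_atTop_nhds_zero_nat ((2 * B / η) ^ 2))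
  filter_upwards [hlarge, eventually_gt_atTop 0] with k hk hk0
  refine sum_filter_birkhoff_le hf hB (fun z => (hlt z).le) hη hk hk0 x fun w hw => ?_
  rw [mul_div_cancel₀ _ two_ne_zero, add_sub_cancel]
  exact (Finset.mem_filter.1 hw).2

end UniqueInvariantMeasure

section Entropy

variable [Fintype 𝒜] [TopologicalSpace 𝒜] [DiscreteTopology 𝒜] [MeasurableSpace 𝒜]
  [BorelSpace 𝒜] {f φ : Omega 𝒜 → ℝ} {μ : Measure (Omega 𝒜)} {k : ℕ}

namespace IsRuelleInvariant

lemma integral_birkhoff (hμ : IsRuelleInvariant f μ) (hnorm : IsNormalized f)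
    (hφ : Continuous φ) (k : ℕ) : ∫ z, birkhoff φ k z ∂μ = k * ∫ z, φ z ∂μ := by
  have := hμ.isProbabilityMeasure
  induction k with
  | zero => simp [birkhoff]
  | succ k ih =>
    have hk := continuous_birkhoff hφ k
    simp only [birkhoff_succ]
    rw [integral_add (integrable_of_continuous hφ)
      (integrable_of_continuous (φ := fun z => birkhoff φ k (shift z))
        (hk.comp continuous_shift)), hμ.integral_comp_shift hnorm hk, ih]
    push_cast
    ring

lemma integral_eq_sum_integral_concat (hμ : IsRuelleInvariant f μ) (hf : Continuous f)
    (hφ : Continuous φ) (k : ℕ) :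
    ∫ z, φ z ∂μ =
      ∑ w : Fin k → 𝒜, ∫ z, exp (birkhoff f k (concat w z)) * φ (concat w z) ∂μ := by
  have := hμ.isProbabilityMeasure
  rw [← hμ.integral_ruelle_iterate hf hφ k]
  simp only [ruelle_iterate_apply]
  exact integral_finsetSum _ fun w _ => integrable_of_continuous
    ((continuous_exp_birkhoff_concat hf w).mul (hφ.comp (continuous_concat w)))

lemma toReal_measure_cyl (hμ : IsRuelleInvariant f μ) (hf : Continuous f) (w : Fin k → 𝒜) :
    (μ (cyl w)).toReal = ∫ z, exp (birkhoff f k (concat w z)) ∂μ := by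
  have hcont : Continuous ((cyl w).indicator fun _ => (1 : ℝ)) :=
    continuous_const.indicator (by simp [(isClopen_cyl w).frontier_eq])
  have hind : ∀ w' z, (cyl w).indicator (fun _ => (1 : ℝ)) (concat w' z) =
      if w' = w then 1 else 0 := fun w' z => by
    simp only [indicator_apply, concat_mem_cyl_iff]
  have hint := hμ.integral_eq_sum_integral_concat hf hcont k
  rw [integral_indicator_const _ (isClopen_cyl w).isOpen.measurableSet, smul_eq_mul, mul_one,
    measureReal_def] at hint
  rw [hint, Finset.sum_eq_single w (fun w' _ hne => by simp [hind, hne]) (by simp)]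
  simp [hind]

lemma neg_mul_integral_eq (hμ : IsRuelleInvariant f μ) (hnorm : IsNormalized f)
    (hf : Continuous f) (k : ℕ) :
    k * -∫ z, f z ∂μ = ∑ w : Fin k → 𝒜, ∫ z, negMulLog (exp (birkhoff f k (concat w z))) ∂μ := by
  rw [mul_neg, ← hμ.integral_birkhoff hnorm hf k,
    hμ.integral_eq_sum_integral_concat hf (continuous_birkhoff hf k) k, ← Finset.sum_neg_distrib]
  simp only [negMulLog, log_exp, neg_mul, integral_neg]

lemma mul_neg_integral_le_blockEntropy (hμ : IsRuelleInvariant f μ) (hnorm : IsNormalized f)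
    (hf : Continuous f) (k : ℕ) : k * -∫ z, f z ∂μ ≤ blockEntropy μ k := by
  have := hμ.isProbabilityMeasure
  rw [hμ.neg_mul_integral_eq hnorm hf, blockEntropy]
  refine Finset.sum_le_sum fun w _ => ?_
  have hexp := continuous_exp_birkhoff_concat hf w
  rw [hμ.toReal_measure_cyl hf]
  exact concaveOn_negMulLog.le_map_integral continuous_negMulLog.continuousOn isClosed_Ici
    (.of_forall fun z => (exp_pos _).le) (integrable_of_continuous hexp)
    (integrable_of_continuous (continuous_negMulLog.comp hexp))

lemma birkhoff_concat_sub_le_log_measure (hμ : IsRuelleInvariant f μ) (hf : Continuous f) {D : ℝ}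
    (w : Fin k → 𝒜)
    (hD : ∀ x z, |birkhoff f k (concat w x) - birkhoff f k (concat w z)| ≤ D) (z : Omega 𝒜) :
    birkhoff f k (concat w z) - D ≤ log (μ (cyl w)).toReal := by
  have := hμ.isProbabilityMeasure
  have hle : exp (birkhoff f k (concat w z) - D) ≤ (μ (cyl w)).toReal := by
    rw [hμ.toReal_measure_cyl hf]
    have hpt : ∀ x, exp (birkhoff f k (concat w z) - D) ≤ exp (birkhoff f k (concat w x)) :=
      fun x => exp_le_exp.2 (by linarith [(abs_le.1 (hD z x)).2])
    simpa using integral_mono (μ := μ) (integrable_const _)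
      (integrable_of_continuous (continuous_exp_birkhoff_concat hf w)) hpt
  exact (le_log_iff_exp_le ((exp_pos _).trans_le hle)).2 hle

lemma blockEntropy_le (hμ : IsRuelleInvariant f μ) (hnorm : IsNormalized f) (hf : Continuous f)
    {D : ℝ} (hD : ∀ (w : Fin k → 𝒜) (x z : Omega 𝒜),
      |birkhoff f k (concat w x) - birkhoff f k (concat w z)| ≤ D) :
    blockEntropy μ k ≤ k * -∫ z, f z ∂μ + D := by
  have := hμ.isProbabilityMeasure
  have hterm : ∀ w : Fin k → 𝒜, negMulLog (μ (cyl w)).toReal ≤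
      ∫ z, exp (birkhoff f k (concat w z)) * (D - birkhoff f k (concat w z)) ∂μ := fun w => by
    have hexp := continuous_exp_birkhoff_concat hf w
    rw [negMulLog, neg_mul_comm]
    nth_rewrite 1 [hμ.toReal_measure_cyl hf]
    rw [← integral_mul_const]
    refine integral_mono (integrable_of_continuous (hexp.mul continuous_const))
      (integrable_of_continuous (hexp.mul (continuous_const.sub
        ((continuous_birkhoff hf k).comp (continuous_concat w))))) fun z => ?_
    refine mul_le_mul_of_nonneg_left ?_ (exp_pos _).le
    linarith [hμ.birkhoff_concat_sub_le_log_measure hf w (hD w) z]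
  have hbirk := continuous_birkhoff hf k
  calc blockEntropy μ k
      ≤ ∑ w : Fin k → 𝒜, ∫ z, exp (birkhoff f k (concat w z)) *
          (D - birkhoff f k (concat w z)) ∂μ := Finset.sum_le_sum fun w _ => hterm w
    _ = ∫ z, (D - birkhoff f k z) ∂μ :=
        (hμ.integral_eq_sum_integral_concat hf (continuous_const.sub hbirk) k).symm
    _ = k * -∫ z, f z ∂μ + D := by
        rw [integral_sub (integrable_const D) (integrable_of_continuous hbirk),
          hμ.integral_birkhoff hnorm hf]
        simp only [integral_const, probReal_univ, one_smul]
        ring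

theorem KSentropy_eq (hμ : IsRuelleInvariant f μ) (hnorm : IsNormalized f) (hf : Continuous f) :
    KSentropy μ = -∫ z, f z ∂μ := by
  have hlow : ∀ n : ℕ, -∫ z, f z ∂μ ≤ blockEntropy μ (n + 1) / (n + 1) := fun n => by
    rw [le_div_iff₀' (by positivity)]
    exact_mod_cast hμ.mul_neg_integral_le_blockEntropy hnorm hf (n + 1)
  refine le_antisymm (le_of_forall_pos_le_add fun ε hε => ?_) (le_ciInf hlow)
  obtain ⟨C, hC⟩ := exists_abs_birkhoff_concat_sub_le hf hε
  have hlim : Tendsto (fun n : ℕ => -∫ z, f z ∂μ + ε + C / ((n + 1 : ℕ) : ℝ)) atTop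
      (𝓝 (-∫ z, f z ∂μ + ε)) := by
    simpa using ((tendsto_const_div_atTop_nhds_zero_nat C).comp
      (tendsto_add_atTop_nat 1)).const_add (-∫ z, f z ∂μ + ε)
  refine ge_of_tendsto' hlim fun n => ?_
  refine (ciInf_le ⟨_, forall_mem_range.2 hlow⟩ n).trans ?_
  rw [div_le_iff₀ (by positivity)]
  refine (hμ.blockEntropy_le hnorm hf (hC (n + 1))).trans_eq ?_
  push_cast
  field_simp
  ring

end IsRuelleInvariant
end Entropy

section GFunction

variable [Fintype 𝒜] {f J : Omega 𝒜 → ℝ}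

lemma IsNormalized.neg_of_nontrivial [Nontrivial 𝒜] (hf : IsNormalized f) (z : Omega 𝒜) :
    f z < 0 := by
  obtain ⟨q, hq⟩ := exists_ne (z 0)
  have hz : cons (z 0) (shift z) = z := by
    funext n
    cases n <;> rfl
  have hpair : ∑ r ∈ {z 0, q}, exp (f (cons r (shift z))) ≤ 1 :=
    (Finset.sum_le_univ_sum_of_nonneg fun r => (exp_pos _).le).trans_eq (hf (shift z))
  rw [Finset.sum_pair hq.symm, hz] at hpair
  exact exp_lt_one_iff.1 (by linarith [exp_pos (f (cons q (shift z)))])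

variable [TopologicalSpace 𝒜]

lemma IsGFunction.continuous_log (hJ : IsGFunction J) : Continuous fun z => log (J z) :=
  hJ.1.log fun z => (hJ.2.1 z).ne'

lemma IsGFunction.isNormalized_log (hJ : IsGFunction J) : IsNormalized fun z => log (J z) :=
  fun x => by simpa only [exp_log (hJ.2.1 _)] using hJ.2.2 x

lemma IsGMeasure.isRuelleInvariant [MeasurableSpace 𝒜] {ν : Measure (Omega 𝒜)}
    (hν : IsGMeasure J ν) : IsRuelleInvariant (fun z => log (J z)) ν where
  isProbabilityMeasure := hν.1
  integral_ruelle φ hφ := by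
    have hcomplex : ruelle (fun z => log (J z)) (fun z => (φ z : ℂ)) =
        fun z => ((ruelle (fun z => log (J z)) φ z : ℝ) : ℂ) := by
      funext z
      simp [ruelle]
    have hint := hν.2 _ (Complex.continuous_ofReal.comp hφ)
    rw [Function.comp_def, hcomplex, integral_complex_ofReal, integral_complex_ofReal] at hint
    exact_mod_cast hint

lemma IsNormalized.exists_forall_le_neg [Nontrivial 𝒜] (hf : IsNormalized f)
    (hcont : Continuous f) : ∃ κ > 0, ∀ z, f z ≤ -κ := by
  obtain ⟨z, -, hz⟩ := isCompact_univ.exists_isMaxOn univ_nonempty hcont.continuousOn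
  exact ⟨-f z, neg_pos.2 (hf.neg_of_nontrivial z), fun u =>
    (hz (mem_univ u)).trans_eq (neg_neg _).symm⟩

variable [DiscreteTopology 𝒜] [MeasurableSpace 𝒜] [BorelSpace 𝒜] {ν : Measure (Omega 𝒜)}

lemma IsRuelleInvariant.isGMeasure (hJ : IsGFunction J)
    (hν : IsRuelleInvariant (fun z => log (J z)) ν) : IsGMeasure J ν := by
  have := hν.isProbabilityMeasure
  refine ⟨hν.isProbabilityMeasure, fun φ hφ => ?_⟩
  have hre : Continuous fun z => (φ z).re := Complex.continuous_re.comp hφ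
  have him : Continuous fun z => (φ z).im := Complex.continuous_im.comp hφ
  have hdecomp : ruelle (fun z => log (J z)) φ = fun z =>
      ((ruelle (fun z => log (J z)) (fun z => (φ z).re) z : ℝ) : ℂ) +
        (ruelle (fun z => log (J z)) (fun z => (φ z).im) z : ℝ) * Complex.I := by
    funext z
    apply Complex.ext <;> simp [ruelle]
  have hsplit : ∀ u v : Omega 𝒜 → ℝ, Continuous u → Continuous v →
      ∫ z, ((u z : ℂ) + v z * Complex.I) ∂ν = (∫ z, u z ∂ν : ℝ) + (∫ z, v z ∂ν : ℝ) * Complex.I :=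
    fun u v hu hv => by
      rw [integral_add (integrable_of_continuous hu).ofReal
        ((integrable_of_continuous hv).ofReal.mul_const _), integral_mul_const,
        integral_complex_ofReal, integral_complex_ofReal]
  have hL {ψ : Omega 𝒜 → ℝ} (hψ : Continuous ψ) := continuous_ruelle hJ.continuous_log hψ
  rw [hdecomp, hsplit _ _ (hL hre) (hL him), hν.integral_ruelle _ hre, hν.integral_ruelle _ him,
    ← hsplit _ _ hre him]
  simp only [Complex.re_add_im]

end GFunction

section GradedWords

/-- `W* ⊔ W*` graded by the length of words; level `k` consists of two copies of `𝒜^(k+1)`. -/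
def gradedWords : (Σ k, (Fin (k + 1) → 𝒜) ⊕ (Fin (k + 1) → 𝒜)) ≃ Words 𝒜 ⊕ Words 𝒜 :=
  Equiv.sigmaSumDistrib _ _

lemma wordLam_pos (J : Omega 𝒜 → ℝ) (x : Omega 𝒜) (v : Words 𝒜 ⊕ Words 𝒜) :
    0 < wordLam J x v := by
  cases v <;> exact exp_pos _

lemma abs_wordVal_mul_wordLam_le {a : Omega 𝒜 → ℝ} {B : ℝ} (ha : ∀ z, |a z| ≤ B)
    (J : Omega 𝒜 → ℝ) (x y : Omega 𝒜) (v : Words 𝒜 ⊕ Words 𝒜) :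
    |wordVal a x y v * wordLam J x v| ≤ B * wordLam J x v := by
  rw [abs_mul, abs_of_pos (wordLam_pos J x v)]
  refine mul_le_mul_of_nonneg_right ?_ (wordLam_pos J x v).le
  cases v <;> exact ha _

lemma le_neg_log_wordLam {J : Omega 𝒜 → ℝ} {κ : ℝ} (hκ : ∀ z, log (J z) ≤ -κ) (x : Omega 𝒜)
    (v : Σ k, (Fin (k + 1) → 𝒜) ⊕ (Fin (k + 1) → 𝒜)) :
    κ * (v.1 + 1) ≤ -log (wordLam J x (gradedWords v)) := by
  have hword : ∀ w : Fin (v.1 + 1) → 𝒜, κ * (v.1 + 1) ≤ -log (JBirk J (v.1 + 1) w x) := fun w => by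
    have := birkhoff_le hκ (v.1 + 1) (concat w x)
    rw [JBirk, log_exp]
    push_cast at this
    linarith
  obtain ⟨k, w | w⟩ := v <;> exact hword w

variable [Fintype 𝒜]

lemma sum_gradedWords (F : Words 𝒜 ⊕ Words 𝒜 → ℝ) (k : ℕ) :
    ∑ w, F (gradedWords ⟨k, w⟩) = ∑ w, F (.inl ⟨k, w⟩) + ∑ w, F (.inr ⟨k, w⟩) :=
  Fintype.sum_sum_type _

lemma sum_filter_le_abs_birkhoff_le (f : Omega 𝒜 → ℝ) (h δ : ℝ) (k : ℕ) (x : Omega 𝒜) :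
    ∑ w : Fin k → 𝒜 with k * δ ≤ |-birkhoff f k (concat w x) - k * h|,
        exp (birkhoff f k (concat w x)) ≤
      ∑ w : Fin k → 𝒜 with k * (-h + δ) ≤ birkhoff f k (concat w x),
        exp (birkhoff f k (concat w x)) +
      ∑ w : Fin k → 𝒜 with k * (h + δ) ≤ birkhoff (fun z => -f z) k (concat w x),
        exp (birkhoff f k (concat w x)) := by
  rw [← Finset.sum_union_inter]
  refine le_add_of_le_of_nonneg (Finset.sum_le_sum_of_subset_of_nonneg (fun w hw => ?_)
    fun w _ _ => (exp_pos _).le) (Finset.sum_nonneg fun w _ => (exp_pos _).le)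
  simp only [Finset.mem_filter, Finset.mem_univ, true_and, Finset.mem_union, le_abs,
    birkhoff_neg] at hw ⊢
  exact hw.symm.imp (fun _ => by linarith) fun _ => by linarith

lemma atypicalMass_wordLam (J : Omega 𝒜 → ℝ) (h δ : ℝ) (k : ℕ) (x : Omega 𝒜) :
    atypicalMass (wordLam J x ∘ gradedWords) h δ k =
      2 * ∑ w : Fin (k + 1) → 𝒜 with ((k + 1 : ℕ) : ℝ) * δ ≤
        |-birkhoff (fun z => log (J z)) (k + 1) (concat w x) - (k + 1 : ℕ) * h|,
        exp (birkhoff (fun z => log (J z)) (k + 1) (concat w x)) := by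
  have hlog : ∀ w : Fin (k + 1) → 𝒜, log (JBirk J (k + 1) w x) =
      birkhoff (fun z => log (J z)) (k + 1) (concat w x) := fun w => log_exp _
  rw [atypicalMass, Finset.sum_filter, Finset.sum_filter, two_mul]
  simp only [Function.comp_apply]
  rw [sum_gradedWords (fun v => if (k + 1) * δ ≤ |-log (wordLam J x v) - (k + 1) * h|
    then wordLam J x v else 0)]
  simp only [wordLam, hlog, Nat.cast_add, Nat.cast_one]
  rfl

lemma sum_wordVal_mul_wordLam (J a : Omega 𝒜 → ℝ) (x y : Omega 𝒜) (k : ℕ) :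
    ∑ w, wordVal a x y (gradedWords ⟨k, w⟩) * wordLam J x (gradedWords ⟨k, w⟩) =
      2 * (ruelle fun z => log (J z))^[k + 1] a x +
        ∑ w : Fin (k + 1) → 𝒜, exp (birkhoff (fun z => log (J z)) (k + 1) (concat w x)) *
          (a (concat w y) - a (concat w x)) := by
  rw [sum_gradedWords fun v => wordVal a x y v * wordLam J x v, ruelle_iterate_apply]
  simp only [wordVal, wordLam, JBirk, mul_sub, Finset.sum_sub_distrib, mul_comm (a _)]
  ring

end GradedWords

section Gibbs

variable [Fintype 𝒜] [TopologicalSpace 𝒜] {J a : Omega 𝒜 → ℝ}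

lemma IsNormalized.tendsto_sum_exp_birkhoff_mul_sub [DiscreteTopology 𝒜] {f : Omega 𝒜 → ℝ}
    (hf : IsNormalized f) {φ : Omega 𝒜 → ℝ} (hφ : Continuous φ) (x y : Omega 𝒜) :
    Tendsto (fun k : ℕ => ∑ w : Fin k → 𝒜,
      exp (birkhoff f k (concat w x)) * (φ (concat w y) - φ (concat w x))) atTop (𝓝 0) := by
  refine Metric.tendsto_atTop'.2 fun ε hε => ?_
  obtain ⟨N, hN⟩ := exists_forall_concat_abs_sub_le hφ (half_pos hε)
  refine ⟨N, fun k hk => ?_⟩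
  rw [dist_zero_right]
  calc ‖∑ w : Fin k → 𝒜, exp (birkhoff f k (concat w x)) * (φ (concat w y) - φ (concat w x))‖
      ≤ ∑ w : Fin k → 𝒜, exp (birkhoff f k (concat w x)) * (ε / 2) :=
        norm_sum_le_of_le _ fun w _ => by
          rw [norm_mul, norm_of_nonneg (exp_pos _).le]
          exact mul_le_mul_of_nonneg_left (hN k hk.le w y x) (exp_pos _).le
    _ = ε / 2 := by rw [← Finset.sum_mul, hf.sum_exp_birkhoff, one_mul]
    _ < ε := half_lt_self hε

variable [DiscreteTopology 𝒜] [MeasurableSpace 𝒜] [BorelSpace 𝒜] {μ : Measure (Omega 𝒜)}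

lemma tendsto_sum_filter_le_abs_birkhoff {f : Omega 𝒜 → ℝ} (hf : IsNormalized f)
    (hcont : Continuous f) (huniq : ∀ ν, IsRuelleInvariant f ν → ν = μ) {δ : ℝ} (hδ : 0 < δ)
    (x : Omega 𝒜) :
    Tendsto (fun k : ℕ => ∑ w : Fin k → 𝒜 with
      k * δ ≤ |-birkhoff f k (concat w x) - k * (-∫ z, f z ∂μ)|,
        exp (birkhoff f k (concat w x))) atTop (𝓝 0) := by
  have hupper := tendsto_sum_filter_le_birkhoff hf hcont huniq hcont
    (c := -(-∫ z, f z ∂μ) + δ) (by linarith) x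
  have hlower := tendsto_sum_filter_le_birkhoff hf hcont huniq (φ := fun z => -f z) hcont.neg
    (c := -∫ z, f z ∂μ + δ) (by rw [integral_neg]; linarith) x
  refine squeeze_zero (fun k => Finset.sum_nonneg fun w _ => (exp_pos _).le)
    (fun k => sum_filter_le_abs_birkhoff_le f _ δ k x) ?_
  simpa only [add_zero] using hupper.add hlower

lemma isEquipartition_wordLam [Nontrivial 𝒜] (hJ : IsGFunction J)
    (hμ : IsRuelleInvariant (fun z => log (J z)) μ)
    (huniq : ∀ ν, IsRuelleInvariant (fun z => log (J z)) ν → ν = μ) (x : Omega 𝒜) :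
    IsEquipartition (wordLam J x ∘ gradedWords) 2 (-∫ z, log (J z) ∂μ) := by
  have := hμ.isProbabilityMeasure
  have hcont := hJ.continuous_log
  obtain ⟨κ, hκ0, hκ⟩ := hJ.isNormalized_log.exists_forall_le_neg hcont
  refine ⟨?_, two_pos, fun v => wordLam_pos J x _, fun k => ?_,
    ⟨κ, hκ0, le_neg_log_wordLam hκ x⟩, fun δ hδ => ?_⟩
  · have := integral_mono (integrable_of_continuous hcont) (integrable_const (μ := μ) _) hκ
    simp only [integral_const, probReal_univ, one_smul] at this
    linarith
  · refine (sum_gradedWords (wordLam J x) k).trans ?_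
    have hsum : ∑ w : Fin (k + 1) → 𝒜, JBirk J (k + 1) w x = 1 :=
      hJ.isNormalized_log.sum_exp_birkhoff (k + 1) x
    simp only [wordLam, hsum]
    norm_num
  · have hmass := tendsto_sum_filter_le_abs_birkhoff hJ.isNormalized_log hcont huniq hδ x
    have hshift := (hmass.comp (tendsto_add_atTop_nat 1)).const_mul 2
    rw [mul_zero] at hshift
    exact hshift.congr fun k => (atypicalMass_wordLam J _ δ k x).symm

lemma tendsto_inv_mul_sum_range_sum_wordVal_mul_wordLam (hJ : IsGFunction J)
    (hμ : IsRuelleInvariant (fun z => log (J z)) μ)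
    (huniq : ∀ ν, IsRuelleInvariant (fun z => log (J z)) ν → ν = μ) (ha : Continuous a)
    (x y : Omega 𝒜) :
    Tendsto (fun n : ℕ => (n : ℝ)⁻¹ * ∑ k ∈ Finset.range n,
      ∑ w, wordVal a x y (gradedWords ⟨k, w⟩) * wordLam J x (gradedWords ⟨k, w⟩))
      atTop (𝓝 (2 * ∫ z, a z ∂μ)) := by
  have hmean := tendsto_inv_mul_sum_range_ruelle_iterate hJ.isNormalized_log hJ.continuous_log
    huniq (continuous_ruelle hJ.continuous_log ha) x
  have herror := ((hJ.isNormalized_log.tendsto_sum_exp_birkhoff_mul_sub ha x y).comp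
    (tendsto_add_atTop_nat 1)).cesaro
  rw [hμ.integral_ruelle a ha] at hmean
  refine (((hmean.const_mul 2).add herror).congr fun n => ?_).trans_eq (by rw [add_zero])
  simp only [sum_wordVal_mul_wordLam, Finset.sum_add_distrib, ← Finset.mul_sum,
    Function.iterate_succ_apply, Function.comp_apply]
  ring

end Gibbs

theorem statement4_general [Fintype 𝒜] [TopologicalSpace 𝒜] [DiscreteTopology 𝒜]
    [MeasurableSpace 𝒜] [BorelSpace 𝒜] (hcard : 2 ≤ Fintype.card 𝒜)
    (J : Omega 𝒜 → ℝ) (hJ : IsGFunction J)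
    (μ : Measure (Omega 𝒜)) (hμ : IsGMeasure J μ)
    (huniq : ∀ ν : Measure (Omega 𝒜), IsGMeasure J ν → ν = μ)
    (x y : Omega 𝒜) (a : Omega 𝒜 → ℝ) (ha : Continuous a)
    (e : ℕ → Words 𝒜 ⊕ Words 𝒜) (hbij : Function.Bijective e)
    (hmono : ∀ m n : ℕ, m ≤ n → wordLam J x (e n) ≤ wordLam J x (e m)) :
    Tendsto
      (fun n : ℕ => (log n)⁻¹ * ∑ k ∈ Finset.range n, wordVal a x y (e k) * wordLam J x (e k))
      atTop (𝓝 ((2 / KSentropy μ) * ∫ z, a z ∂μ)) := by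
  have : Nontrivial 𝒜 := Fintype.one_lt_card_iff_nontrivial.1 hcard
  have hinv := hμ.isRuelleInvariant
  have hinv_uniq : ∀ ν, IsRuelleInvariant (fun z => log (J z)) ν → ν = μ :=
    fun ν hν => huniq ν (hν.isGMeasure hJ)
  obtain ⟨B, hB0, hB⟩ := exists_forall_abs_le ha
  let e' := (Equiv.ofBijective e hbij).trans gradedWords.symm
  have he' : ∀ n, gradedWords (e' n) = e n := fun n => gradedWords.apply_symm_apply (e n)
  have hlim := (isEquipartition_wordLam hJ hinv hinv_uniq x).tendsto_inv_log_mul_sum_range hB0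
    (fun v => abs_wordVal_mul_wordLam_le hB J x y (gradedWords v))
    (tendsto_inv_mul_sum_range_sum_wordVal_mul_wordLam hJ hinv hinv_uniq ha x y) e'
    (fun m n hmn => by simpa only [Function.comp_apply, he'] using hmono m n hmn)
  rw [hinv.KSentropy_eq hJ.isNormalized_log hJ.continuous_log, div_mul_eq_mul_div]
  simpa only [he'] using hlim

/-- Dixmier trace representation, main theorem of Section 4.
For the unique `g`-measure `μ` of an `α`-Hölder `g`-function `log J`, a continuous `a : Ω → ℝ`
and any nonincreasing enumeration `((a_k, λ_k))_k` of the eigenvalue families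
`{(a(wx), 𝕁(wx))} ⊔ {(a(wy), 𝕁(wx))}`,
`lim_n (1/log n) ∑_{k<n} a_k λ_k = (2/h_μ(σ)) ∫ a dμ`. -/
theorem statement4 [Fintype 𝒜] [TopologicalSpace 𝒜] [DiscreteTopology 𝒜]
    [MeasurableSpace 𝒜] [BorelSpace 𝒜] (hcard : 2 ≤ Fintype.card 𝒜)
    (α : ℝ) (hα : α ∈ Set.Ioo (0 : ℝ) 1)
    (J : Omega 𝒜 → ℝ) (hJ : IsGFunction J)
    (hHolJ : IsHolderW α (fun z => Real.log (J z)))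
    (μ : Measure (Omega 𝒜)) (hμ : IsGMeasure J μ)
    (huniq : ∀ ν : Measure (Omega 𝒜), IsGMeasure J ν → ν = μ)
    (x y : Omega 𝒜) (a : Omega 𝒜 → ℝ) (ha : Continuous a)
    (e : ℕ → Words 𝒜 ⊕ Words 𝒜) (hbij : Function.Bijective e)
    (hmono : ∀ m n : ℕ, m ≤ n → wordLam J x (e n) ≤ wordLam J x (e m)) :
    Tendsto
      (fun n : ℕ => (Real.log n)⁻¹ * ∑ k ∈ Finset.range n, wordVal a x y (e k) * wordLam J x (e k))
      atTop (𝓝 ((2 / KSentropy μ) * ∫ z, a z ∂μ)) :=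
  statement4_general hcard J hJ μ hμ huniq x y a ha e hbij hmono

end GS
end

section
/- Let (λ_k)_{k≥1} be a nonincreasing sequence of positive real numbers with Σ_{k≥1} λ_k^s < ∞ for every s>1, let (a_k)_{k≥1} be a bounded sequence of nonnegative real numbers, and let C∈ℝ. Then lim_{s→1⁺} (s−1) Σ_{k≥1} a_k λ_k^s = C if and only if lim_{n→∞} (1/log n) Σ_{k=1}^n a_k λ_k = C. -/
open Filter Topology

/-!
Let `ν` be the measure with mass `a k * lam k` at each `-log (lam k)`. The Dirichlet series at
`1 + s` is the Laplace transform `∫ exp (-(s * x)) dν`, and the claim becomes: `s` times it tends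
to `C` as `s → 0⁺` iff `ν (-∞, x] / x → C` as `x → ∞`.

The forward direction is Karamata's argument. Evaluating the hypothesis at `(n + 1) * s` shows that
`s * ∫ exp (-(s * x)) * P (exp (-(s * x))) dν → C * ∫₀¹ P` when `P` is a monomial, hence for
polynomials, and for continuous functions by Weierstrass approximation. Functions `h` with `t * h t`
between the indicators of `t ≥ e ^ (-α)` and of `t > e ^ (-β)` have `∫₀¹ h` between `α` and `β`,
which traps `ν (-∞, x] / x`. The converse is the layer cake formula and dominated convergence,
since `∫₀¹ -log t = 1`.

Finally `ν (-∞, x]` sums over the `k` with `lam k ≥ e ^ (-x)`, not over `k < e ^ x`. As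
`(k + 1) * lam k ^ θ ≤ ∑ lam ^ θ` for `θ > 1`, the former indices satisfy `k < e ^ (θ * x + L)`;
conversely, the terms of the latter sum with `lam k < e ^ (-x)` contribute at most `sup a`. Such
distortions do not affect the linear growth rate.
-/

lemma exists_one_lt_mul_lt {b C : ℝ} (hb : C < b) : ∃ θ > 1, C * θ < b := by
  have hlim : Tendsto (fun θ ↦ C * θ) (𝓝[>] 1) (𝓝 C) :=
    ((continuous_const_mul C).tendsto' 1 C (mul_one C)).mono_left nhdsWithin_le_nhds
  exact (eventually_mem_nhdsWithin.and (hlim.eventually_lt_const hb)).exists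

lemma exists_mem_Ioo_lt_mul {b C : ℝ} (hb : b < C) : ∃ θ ∈ Set.Ioo (0 : ℝ) 1, b < C * θ := by
  have hlim : Tendsto (fun θ ↦ C * θ) (𝓝[<] 1) (𝓝 C) :=
    ((continuous_const_mul C).tendsto' 1 C (mul_one C)).mono_left nhdsWithin_le_nhds
  exact (Filter.Eventually.and (Ioo_mem_nhdsLT zero_lt_one) (hlim.eventually_const_lt hb)).exists

section Karamata

open MeasureTheory Set Polynomial

variable {μ : Measure ℝ} {C s : ℝ}

lemma measure_Iic_ne_top_of_integrable_exp (hs : 0 < s)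
    (hμ : Integrable (fun x ↦ Real.exp (-(s * x))) μ) (x : ℝ) : μ (Iic x) ≠ ⊤ := by
  refine ((measure_mono fun y (hy : y ≤ x) ↦ ?_).trans_lt
    (hμ.measure_ge_lt_top (Real.exp_pos (-(s * x))))).ne
  exact Real.exp_le_exp.2 (by gcongr)

lemma monotone_measureReal_Iic (hμ : ∀ x, μ (Iic x) ≠ ⊤) : Monotone fun x ↦ μ.real (Iic x) :=
  fun _ y hxy ↦ measureReal_mono (Iic_subset_Iic.2 hxy) (hμ y)

lemma exp_neg_mul_mem_Icc {x : ℝ} (hs : 0 ≤ s) (hx : 0 ≤ x) :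
    Real.exp (-(s * x)) ∈ Icc (0 : ℝ) 1 :=
  ⟨(Real.exp_pos _).le, Real.exp_le_one_iff.2 (neg_nonpos.2 (mul_nonneg hs hx))⟩

lemma nonneg_of_tendsto_mul_integral_exp
    (h : Tendsto (fun s ↦ s * ∫ x, Real.exp (-(s * x)) ∂μ) (𝓝[>] 0) (𝓝 C)) : 0 ≤ C := by
  refine ge_of_tendsto h ?_
  filter_upwards [self_mem_nhdsWithin] with s hs
  exact mul_nonneg (le_of_lt hs) (integral_nonneg fun x ↦ (Real.exp_pos _).le)

lemma integrable_exp_mul_comp_exp (hμ₀ : ∀ᵐ x ∂μ, 0 ≤ x) (hs : 0 ≤ s)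
    (hμ : Integrable (fun x ↦ Real.exp (-(s * x))) μ) {h : ℝ → ℝ} (hh : Continuous h) :
    Integrable (fun x ↦ Real.exp (-(s * x)) * h (Real.exp (-(s * x)))) μ := by
  obtain ⟨B, hB⟩ := isCompact_Icc.exists_bound_of_continuousOn (s := Icc (0 : ℝ) 1) hh.continuousOn
  refine hμ.mul_bdd (c := B) (by fun_prop) ?_
  filter_upwards [hμ₀] with x hx
  exact hB _ (exp_neg_mul_mem_Icc hs hx)

lemma tendsto_mul_integral_exp_mul_polynomial (hμ₀ : ∀ᵐ x ∂μ, 0 ≤ x)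
    (hμ : ∀ s > 0, Integrable (fun x ↦ Real.exp (-(s * x))) μ)
    (hC : Tendsto (fun s ↦ s * ∫ x, Real.exp (-(s * x)) ∂μ) (𝓝[>] 0) (𝓝 C)) (P : ℝ[X]) :
    Tendsto (fun s ↦ s * ∫ x, Real.exp (-(s * x)) * P.eval (Real.exp (-(s * x))) ∂μ) (𝓝[>] 0)
      (𝓝 (C * ∫ t in (0 : ℝ)..1, P.eval t)) := by
  induction P using Polynomial.induction_on' with
  | add P Q hP hQ =>
    simp only [eval_add]
    rw [intervalIntegral.integral_add (P.continuous.intervalIntegrable _ _)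
      (Q.continuous.intervalIntegrable _ _), mul_add]
    refine (hP.add hQ).congr' ?_
    filter_upwards [self_mem_nhdsWithin] with s hs
    simp only [mul_add]
    rw [integral_add (integrable_exp_mul_comp_exp hμ₀ (le_of_lt hs) (hμ s hs) P.continuous)
      (integrable_exp_mul_comp_exp hμ₀ (le_of_lt hs) (hμ s hs) Q.continuous), mul_add]
  | monomial n c =>
    have hn : (0 : ℝ) < n + 1 := by positivity
    have hdil : Tendsto (fun s : ℝ ↦ (n + 1) * s) (𝓝[>] 0) (𝓝[>] 0) :=
      tendsto_iff_comap.2 (comap_mulLeft_nhdsGT_zero hn).ge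
    have hpow (s x : ℝ) : Real.exp (-(s * x)) * (monomial n c).eval (Real.exp (-(s * x)))
        = c * Real.exp (-((n + 1) * s * x)) := by
      rw [eval_monomial, ← Real.exp_nat_mul, mul_left_comm, ← Real.exp_add]
      ring_nf
    have hint : C * ∫ t in (0 : ℝ)..1, (monomial n c).eval t = c / (n + 1) * C := by
      simp only [eval_monomial, intervalIntegral.integral_const_mul, integral_pow, one_pow,
        zero_pow n.succ_ne_zero, sub_zero]
      ring
    rw [hint]
    refine ((hC.comp hdil).const_mul (c / (n + 1))).congr fun s ↦ ?_
    simp only [Function.comp, hpow, integral_const_mul]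
    field_simp

lemma exists_polynomial_ge_integral_lt {h : ℝ → ℝ} (hh : Continuous h) {ε : ℝ} (hε : 0 < ε) :
    ∃ P : ℝ[X], (∀ t ∈ Icc (0 : ℝ) 1, h t ≤ P.eval t) ∧
      ∫ t in (0 : ℝ)..1, P.eval t < (∫ t in (0 : ℝ)..1, h t) + ε := by
  obtain ⟨P, hP⟩ := exists_polynomial_near_of_continuousOn 0 1 (fun t ↦ h t + ε / 3)
    (by fun_prop) (ε / 3) (by positivity)
  refine ⟨P, fun t ht ↦ by linarith [(abs_lt.1 (hP t ht)).1], ?_⟩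
  calc ∫ t in (0 : ℝ)..1, P.eval t ≤ ∫ t in (0 : ℝ)..1, (h t + 2 * (ε / 3)) :=
        intervalIntegral.integral_mono_on zero_le_one (P.continuous.intervalIntegrable _ _)
          (Continuous.intervalIntegrable (by fun_prop) _ _)
          fun t ht ↦ by linarith [(abs_lt.1 (hP t ht)).2]
    _ = (∫ t in (0 : ℝ)..1, h t) + 2 * (ε / 3) := by
        rw [intervalIntegral.integral_add (hh.intervalIntegrable _ _) (by simp)]
        simp
    _ < (∫ t in (0 : ℝ)..1, h t) + ε := by linarith

lemma eventually_mul_integral_exp_mul_lt (hμ₀ : ∀ᵐ x ∂μ, 0 ≤ x)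
    (hμ : ∀ s > 0, Integrable (fun x ↦ Real.exp (-(s * x))) μ)
    (hC : Tendsto (fun s ↦ s * ∫ x, Real.exp (-(s * x)) ∂μ) (𝓝[>] 0) (𝓝 C))
    {h : ℝ → ℝ} (hh : Continuous h) {b : ℝ} (hb : C * ∫ t in (0 : ℝ)..1, h t < b) :
    ∀ᶠ s in 𝓝[>] 0, s * ∫ x, Real.exp (-(s * x)) * h (Real.exp (-(s * x))) ∂μ < b := by
  obtain ⟨ε, hε, hεb⟩ : ∃ ε > 0, C * ((∫ t in (0 : ℝ)..1, h t) + ε) < b := by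
    have hlim : Tendsto (fun ε ↦ C * ((∫ t in (0 : ℝ)..1, h t) + ε)) (𝓝[>] 0)
        (𝓝 (C * ∫ t in (0 : ℝ)..1, h t)) :=
      (Continuous.tendsto' (by fun_prop) 0 _ (by rw [add_zero])).mono_left nhdsWithin_le_nhds
    exact (eventually_mem_nhdsWithin.and (hlim.eventually_lt_const hb)).exists
  obtain ⟨P, hP_ge, hP_lt⟩ := exists_polynomial_ge_integral_lt hh hε
  have hlt : C * ∫ t in (0 : ℝ)..1, P.eval t < b :=
    (mul_le_mul_of_nonneg_left hP_lt.le (nonneg_of_tendsto_mul_integral_exp hC)).trans_lt hεb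
  filter_upwards [(tendsto_mul_integral_exp_mul_polynomial hμ₀ hμ hC P).eventually_lt_const hlt,
    self_mem_nhdsWithin] with s hsP (hs : 0 < s)
  refine lt_of_le_of_lt (mul_le_mul_of_nonneg_left ?_ hs.le) hsP
  refine integral_mono_ae (integrable_exp_mul_comp_exp hμ₀ hs.le (hμ s hs) hh)
    (integrable_exp_mul_comp_exp hμ₀ hs.le (hμ s hs) P.continuous) ?_
  filter_upwards [hμ₀] with x hx
  exact mul_le_mul_of_nonneg_left (hP_ge _ (exp_neg_mul_mem_Icc hs.le hx)) (Real.exp_pos _).le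

lemma tendsto_mul_integral_exp_mul_continuous (hμ₀ : ∀ᵐ x ∂μ, 0 ≤ x)
    (hμ : ∀ s > 0, Integrable (fun x ↦ Real.exp (-(s * x))) μ)
    (hC : Tendsto (fun s ↦ s * ∫ x, Real.exp (-(s * x)) ∂μ) (𝓝[>] 0) (𝓝 C))
    {h : ℝ → ℝ} (hh : Continuous h) :
    Tendsto (fun s ↦ s * ∫ x, Real.exp (-(s * x)) * h (Real.exp (-(s * x))) ∂μ) (𝓝[>] 0)
      (𝓝 (C * ∫ t in (0 : ℝ)..1, h t)) := by
  refine tendsto_order.2 ⟨fun b hb ↦ ?_, fun b hb ↦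
    eventually_mul_integral_exp_mul_lt hμ₀ hμ hC hh hb⟩
  have hneg : C * ∫ t in (0 : ℝ)..1, -h t < -b := by
    rwa [intervalIntegral.integral_neg, mul_neg, neg_lt_neg_iff]
  filter_upwards [eventually_mul_integral_exp_mul_lt hμ₀ hμ hC hh.neg hneg] with s hs
  simpa only [Pi.neg_apply, mul_neg, integral_neg, neg_lt_neg_iff] using hs

lemma exists_continuous_indicator_le_mul_le_indicator {a b : ℝ} (ha : 0 < a) (hab : a < b) :
    ∃ h : ℝ → ℝ, Continuous h ∧ (∀ t, (Ici b).indicator 1 t ≤ t * h t) ∧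
      ∀ t, t * h t ≤ (Ioi a).indicator 1 t := by
  obtain ⟨φ, hφa, hφb, hφ⟩ := exists_continuous_zero_one_of_isClosed (isClosed_Iic (a := a))
    (isClosed_Ici (a := b)) (Iic_disjoint_Ici.2 hab.not_ge)
  have hmul (t : ℝ) : t * (φ t / max t a) = φ t := by
    rcases le_or_gt t a with hta | hat
    · simp [hφa hta]
    · rw [max_eq_left hat.le, mul_div_cancel₀ _ (ha.trans hat).ne']
  refine ⟨fun t ↦ φ t / max t a, φ.continuous.div (by fun_prop) fun t ↦
    (lt_max_of_lt_right ha).ne', fun t ↦ ?_, fun t ↦ ?_⟩ <;> rw [hmul]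
  · exact indicator_le' (fun t ht ↦ (hφb ht).ge) (fun t _ ↦ (hφ t).1) t
  · by_cases hat : a < t
    · simpa [hat] using (hφ t).2
    · simp [hat, hφa (not_lt.1 hat)]

lemma neg_log_le_integral_of_indicator_le_mul {h : ℝ → ℝ} (hh : Continuous h) {b : ℝ} (hb₀ : 0 < b)
    (hb₁ : b ≤ 1) (hle : ∀ t, (Ici b).indicator 1 t ≤ t * h t) :
    -Real.log b ≤ ∫ t in (0 : ℝ)..1, h t := by
  have hinv : IntervalIntegrable (fun t : ℝ ↦ t⁻¹) volume b 1 :=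
    intervalIntegral.intervalIntegrable_inv (fun t ht ↦ by
      rw [uIcc_of_le hb₁] at ht; exact (hb₀.trans_le ht.1).ne') continuousOn_id
  have hleft : ∫ _ in (0 : ℝ)..b, (0 : ℝ) ≤ ∫ t in (0 : ℝ)..b, h t := by
    refine intervalIntegral.integral_mono_on_of_le_Ioo hb₀.le (by simp)
      (hh.intervalIntegrable _ _) fun t ht ↦ nonneg_of_mul_nonneg_right ?_ ht.1
    exact (indicator_nonneg (fun _ _ ↦ zero_le_one) t).trans (hle t)
  have hright : ∫ t in b..1, t⁻¹ ≤ ∫ t in b..1, h t := by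
    refine intervalIntegral.integral_mono_on hb₁ hinv (hh.intervalIntegrable _ _) fun t ht ↦ ?_
    rw [inv_le_iff_one_le_mul₀' (hb₀.trans_le ht.1)]
    simpa [ht.1] using hle t
  rw [integral_inv_of_pos hb₀ one_pos, one_div, Real.log_inv] at hright
  rw [← intervalIntegral.integral_add_adjacent_intervals (hh.intervalIntegrable 0 b)
    (hh.intervalIntegrable b 1)]
  simpa using add_le_add hleft hright

lemma integral_le_neg_log_of_mul_le_indicator {h : ℝ → ℝ} (hh : Continuous h) {a : ℝ} (ha₀ : 0 < a)
    (ha₁ : a ≤ 1) (hle : ∀ t, t * h t ≤ (Ioi a).indicator 1 t) :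
    ∫ t in (0 : ℝ)..1, h t ≤ -Real.log a := by
  have hinv : IntervalIntegrable (fun t : ℝ ↦ t⁻¹) volume a 1 :=
    intervalIntegral.intervalIntegrable_inv (fun t ht ↦ by
      rw [uIcc_of_le ha₁] at ht; exact (ha₀.trans_le ht.1).ne') continuousOn_id
  have hleft : ∫ t in (0 : ℝ)..a, h t ≤ ∫ _ in (0 : ℝ)..a, (0 : ℝ) := by
    refine intervalIntegral.integral_mono_on_of_le_Ioo ha₀.le (hh.intervalIntegrable _ _)
      (by simp) fun t ht ↦ nonpos_of_mul_nonpos_right ?_ ht.1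
    simpa [ht.2.not_gt] using hle t
  have hright : ∫ t in a..1, h t ≤ ∫ t in a..1, t⁻¹ := by
    refine intervalIntegral.integral_mono_on ha₁ (hh.intervalIntegrable _ _) hinv fun t ht ↦ ?_
    rw [← one_div, le_div_iff₀' (ha₀.trans_le ht.1)]
    exact (hle t).trans (indicator_le_self' (fun _ _ ↦ zero_le_one) t)
  rw [integral_inv_of_pos ha₀ one_pos, one_div, Real.log_inv] at hright
  rw [← intervalIntegral.integral_add_adjacent_intervals (hh.intervalIntegrable 0 a)
    (hh.intervalIntegrable a 1)]
  simpa using add_le_add hleft hright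

lemma exists_tendsto_between_measureReal_Iic (hμ₀ : ∀ᵐ x ∂μ, 0 ≤ x)
    (hμ : ∀ s > 0, Integrable (fun x ↦ Real.exp (-(s * x))) μ)
    (hC : Tendsto (fun s ↦ s * ∫ x, Real.exp (-(s * x)) ∂μ) (𝓝[>] 0) (𝓝 C))
    {α β : ℝ} (hα : 0 ≤ α) (hαβ : α < β) :
    ∃ I ∈ Icc α β, ∃ T : ℝ → ℝ, Tendsto T (𝓝[>] 0) (𝓝 (C * I)) ∧
      ∀ s > 0, s * μ.real (Iic (α / s)) ≤ T s ∧ T s ≤ s * μ.real (Iic (β / s)) := by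
  obtain ⟨h, hh, hle, hge⟩ := exists_continuous_indicator_le_mul_le_indicator
    (Real.exp_pos (-β)) (Real.exp_lt_exp.2 (neg_lt_neg hαβ))
  have hI₁ := neg_log_le_integral_of_indicator_le_mul hh (Real.exp_pos (-α))
    (Real.exp_le_one_iff.2 (by linarith)) hle
  have hI₂ := integral_le_neg_log_of_mul_le_indicator hh (Real.exp_pos (-β))
    (Real.exp_le_one_iff.2 (by linarith)) hge
  rw [Real.log_exp, neg_neg] at hI₁ hI₂
  refine ⟨_, ⟨hI₁, hI₂⟩, _, tendsto_mul_integral_exp_mul_continuous hμ₀ hμ hC hh, fun s hs ↦ ?_⟩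
  have hfin := measure_Iic_ne_top_of_integrable_exp hs (hμ s hs)
  have hint := integrable_exp_mul_comp_exp hμ₀ hs.le (hμ s hs) hh
  have hind (y : ℝ) : Integrable ((Iic y).indicator (1 : ℝ → ℝ)) μ :=
    (integrable_indicator_iff measurableSet_Iic).2 (integrableOn_const (hfin y))
  simp only [← integral_indicator_one measurableSet_Iic]
  constructor <;> refine mul_le_mul_of_nonneg_left ?_ hs.le
  · refine integral_mono (hind _) hint fun x ↦ ?_
    simpa [indicator, le_div_iff₀' hs] using hle (Real.exp (-(s * x)))
  · refine integral_mono hint (hind _) fun x ↦ (hge (Real.exp (-(s * x)))).trans ?_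
    simp only [indicator, mem_Ioi, Real.exp_lt_exp, neg_lt_neg_iff, mem_Iic, le_div_iff₀' hs,
      Pi.one_apply]
    split_ifs <;> linarith

theorem tendsto_inv_mul_measureReal_Iic_of_tendsto_mul_integral_exp (hμ₀ : ∀ᵐ x ∂μ, 0 ≤ x)
    (hμ : ∀ s > 0, Integrable (fun x ↦ Real.exp (-(s * x))) μ)
    (hC : Tendsto (fun s ↦ s * ∫ x, Real.exp (-(s * x)) ∂μ) (𝓝[>] 0) (𝓝 C)) :
    Tendsto (fun x ↦ x⁻¹ * μ.real (Iic x)) atTop (𝓝 C) := by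
  have hC₀ := nonneg_of_tendsto_mul_integral_exp hC
  have hinv := tendsto_inv_atTop_nhdsGT_zero (𝕜 := ℝ)
  refine tendsto_order.2 ⟨fun b hb ↦ ?_, fun b hb ↦ ?_⟩
  · obtain ⟨α, ⟨hα₀, hα₁⟩, hα⟩ := exists_mem_Ioo_lt_mul hb
    obtain ⟨I, hI, T, hT, hle⟩ :=
      exists_tendsto_between_measureReal_Iic hμ₀ hμ hC hα₀.le hα₁
    have hbI : b < C * I := hα.trans_le (mul_le_mul_of_nonneg_left hI.1 hC₀)
    filter_upwards [hinv.eventually (hT.eventually_const_lt hbI), eventually_gt_atTop 0]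
      with x hbT hx
    simpa using hbT.trans_le (hle x⁻¹ (inv_pos.2 hx)).2
  · obtain ⟨β, hβ₁, hβ⟩ := exists_one_lt_mul_lt hb
    obtain ⟨I, hI, T, hT, hle⟩ :=
      exists_tendsto_between_measureReal_Iic hμ₀ hμ hC zero_le_one hβ₁
    have hIb : C * I < b := (mul_le_mul_of_nonneg_left hI.2 hC₀).trans_lt hβ
    filter_upwards [hinv.eventually (hT.eventually_lt_const hIb), eventually_gt_atTop 0]
      with x hTb hx
    simpa using (hle x⁻¹ (inv_pos.2 hx)).1.trans_lt hTb

lemma exists_le_mul_add_one_of_monotone {G : ℝ → ℝ} (hG : Monotone G)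
    (hC : Tendsto (fun x ↦ x⁻¹ * G x) atTop (𝓝 C)) : ∃ A, ∀ x ≥ 0, G x ≤ A * (x + 1) := by
  obtain ⟨X, hX⟩ := eventually_atTop.1 (hC.eventually_lt_const (lt_add_one C))
  refine ⟨|C + 1| + |G (max X 1)|, fun x hx ↦ ?_⟩
  rcases le_total x (max X 1) with hxX | hXx
  · calc G x ≤ |G (max X 1)| := (hG hxX).trans (le_abs_self _)
      _ ≤ (|C + 1| + |G (max X 1)|) * (x + 1) := by
        nlinarith [abs_nonneg (C + 1), abs_nonneg (G (max X 1))]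
  · have hx₀ : 0 < x := zero_lt_one.trans_le ((le_max_right X 1).trans hXx)
    have hlt := hX x ((le_max_left X 1).trans hXx)
    rw [inv_mul_lt_iff₀ hx₀] at hlt
    nlinarith [le_abs_self (C + 1), abs_nonneg (C + 1), abs_nonneg (G (max X 1))]

lemma tendsto_mul_comp_div {G : ℝ → ℝ} (hC : Tendsto (fun x ↦ x⁻¹ * G x) atTop (𝓝 C))
    {y : ℝ} (hy : 0 ≤ y) : Tendsto (fun s ↦ s * G (y / s)) (𝓝[>] 0) (𝓝 (C * y)) := by
  rcases hy.eq_or_lt with rfl | hy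
  · simpa using (tendsto_nhdsWithin_of_tendsto_nhds (s := Ioi (0 : ℝ))
      ((continuous_mul_const (G 0)).tendsto 0))
  · have hdiv : Tendsto (fun s ↦ y / s) (𝓝[>] 0) atTop :=
      tendsto_inv_nhdsGT_zero.const_mul_atTop hy
    refine ((hC.comp hdiv).mul_const y).congr fun s ↦ ?_
    simp only [Function.comp]
    field_simp

lemma integral_exp_neg_mul_eq_integral_measureReal_Iic (hμ₀ : ∀ᵐ x ∂μ, 0 ≤ x) (hs : 0 < s)
    (hμ : Integrable (fun x ↦ Real.exp (-(s * x))) μ) :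
    ∫ x, Real.exp (-(s * x)) ∂μ = ∫ t in (0 : ℝ)..1, μ.real (Iic (-Real.log t / s)) := by
  rw [hμ.integral_eq_integral_Ioc_meas_le (M := 1) (.of_forall fun x ↦ (Real.exp_pos _).le)
    (hμ₀.mono fun x hx ↦ (exp_neg_mul_mem_Icc hs.le hx).2),
    intervalIntegral.integral_of_le zero_le_one]
  refine setIntegral_congr_fun measurableSet_Ioc fun t ht ↦ ?_
  have hset : {x | t ≤ Real.exp (-(s * x))} = Iic (-Real.log t / s) := by
    ext x
    rw [mem_ofPred_eq, mem_Iic, le_div_iff₀' hs, ← Real.log_le_iff_le_exp ht.1, le_neg]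
  rw [hset]

theorem tendsto_mul_integral_exp_of_tendsto_inv_mul_measureReal_Iic (hμ₀ : ∀ᵐ x ∂μ, 0 ≤ x)
    (hμ : ∀ s > 0, Integrable (fun x ↦ Real.exp (-(s * x))) μ)
    (hC : Tendsto (fun x ↦ x⁻¹ * μ.real (Iic x)) atTop (𝓝 C)) :
    Tendsto (fun s ↦ s * ∫ x, Real.exp (-(s * x)) ∂μ) (𝓝[>] 0) (𝓝 C) := by
  have hmono : Monotone fun x ↦ μ.real (Iic x) :=
    monotone_measureReal_Iic (measure_Iic_ne_top_of_integrable_exp one_pos (hμ 1 one_pos))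
  obtain ⟨A, hA⟩ := exists_le_mul_add_one_of_monotone hmono hC
  have hlog : ∫ t in (0 : ℝ)..1, C * -Real.log t = C := by
    simp [intervalIntegral.integral_const_mul]
  have hlim : Tendsto (fun s ↦ ∫ t in (0 : ℝ)..1, s * μ.real (Iic (-Real.log t / s))) (𝓝[>] 0)
      (𝓝 (∫ t in (0 : ℝ)..1, C * -Real.log t)) := by
    refine intervalIntegral.tendsto_integral_filter_of_dominated_convergence
      (fun t ↦ A * (-Real.log t + 1)) ?_ ?_
      ((intervalIntegral.intervalIntegrable_log'.neg.add (by simp)).const_mul A) ?_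
    · refine .of_forall fun s ↦ Measurable.aestronglyMeasurable ?_
      exact (hmono.measurable.comp (by fun_prop : Measurable fun t ↦ -Real.log t / s)).const_mul s
    · filter_upwards [Ioo_mem_nhdsGT one_pos] with s hs
      refine .of_forall fun t ht ↦ ?_
      rw [uIoc_of_le zero_le_one] at ht
      have hlog : 0 ≤ -Real.log t := neg_nonneg.2 (Real.log_nonpos ht.1.le ht.2)
      have hs₀ := hs.1
      have hbound := hA (-Real.log t / s) (by positivity)
      have hA₀ : 0 ≤ A := by simpa using measureReal_nonneg.trans (hA 0 le_rfl)
      rw [Real.norm_of_nonneg (by positivity)]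
      calc s * μ.real (Iic (-Real.log t / s)) ≤ s * (A * (-Real.log t / s + 1)) := by gcongr
        _ = A * (-Real.log t + s) := by field_simp
        _ ≤ A * (-Real.log t + 1) := by have := hs.2.le; gcongr
    · refine .of_forall fun t ht ↦ tendsto_mul_comp_div hC ?_
      rw [uIoc_of_le zero_le_one] at ht
      exact neg_nonneg.2 (Real.log_nonpos ht.1.le ht.2)
  rw [hlog] at hlim
  refine hlim.congr' ?_
  filter_upwards [self_mem_nhdsWithin] with s hs
  rw [integral_exp_neg_mul_eq_integral_measureReal_Iic hμ₀ hs (hμ s hs),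
    intervalIntegral.integral_const_mul]

lemma tendsto_mul_setIntegral_Iio_exp (hμ : Integrable (fun x ↦ Real.exp (-x)) μ) :
    Tendsto (fun s ↦ s * ∫ x in Iio 0, Real.exp (-(s * x)) ∂μ) (𝓝[>] 0) (𝓝 0) := by
  have hid : Tendsto (fun s : ℝ ↦ s * ∫ x in Iio 0, Real.exp (-x) ∂μ) (𝓝[>] 0) (𝓝 0) :=
    ((continuous_mul_const _).tendsto' 0 0 (zero_mul _)).mono_left nhdsWithin_le_nhds
  refine squeeze_zero' ?_ ?_ hid
  · filter_upwards [self_mem_nhdsWithin] with s hs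
    exact mul_nonneg (le_of_lt hs) (integral_nonneg fun _ ↦ (Real.exp_pos _).le)
  · filter_upwards [Ioo_mem_nhdsGT one_pos] with s hs
    refine mul_le_mul_of_nonneg_left ?_ hs.1.le
    refine integral_mono_of_nonneg (.of_forall fun _ ↦ (Real.exp_pos _).le) hμ.restrict ?_
    filter_upwards [ae_restrict_mem measurableSet_Iio] with x hx
    exact Real.exp_le_exp.2 (by nlinarith [hs.2, mem_Iio.1 hx])

lemma tendsto_mul_setIntegral_Ici_exp_iff
    (hμ : ∀ s > 0, Integrable (fun x ↦ Real.exp (-(s * x))) μ) :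
    Tendsto (fun s ↦ s * ∫ x in Ici 0, Real.exp (-(s * x)) ∂μ) (𝓝[>] 0) (𝓝 C) ↔
      Tendsto (fun s ↦ s * ∫ x, Real.exp (-(s * x)) ∂μ) (𝓝[>] 0) (𝓝 C) := by
  have hneg := tendsto_mul_setIntegral_Iio_exp (μ := μ) (by simpa using hμ 1 one_pos)
  refine tendsto_iff_of_dist (hneg.congr' ?_)
  filter_upwards [self_mem_nhdsWithin] with s hs
  have hsplit := integral_add_compl (measurableSet_Iio (a := 0)) (hμ s hs)
  rw [compl_Iio] at hsplit
  have hnonneg : 0 ≤ ∫ x in Iio 0, Real.exp (-(s * x)) ∂μ :=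
    integral_nonneg fun _ ↦ (Real.exp_pos _).le
  rw [← hsplit, mul_add, add_comm (s * _), dist_self_add_right,
    Real.norm_of_nonneg (mul_nonneg (le_of_lt hs) hnonneg)]

lemma tendsto_inv_mul_measureReal_restrict_Ici_iff (hμ : ∀ x, μ (Iic x) ≠ ⊤) :
    Tendsto (fun x ↦ x⁻¹ * (μ.restrict (Ici 0)).real (Iic x)) atTop (𝓝 C) ↔
      Tendsto (fun x ↦ x⁻¹ * μ.real (Iic x)) atTop (𝓝 C) := by
  have hneg : Tendsto (fun x : ℝ ↦ x⁻¹ * μ.real (Iio 0)) atTop (𝓝 0) := by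
    simpa using tendsto_inv_atTop_zero.mul_const (μ.real (Iio 0))
  refine tendsto_iff_of_dist (hneg.congr' ?_)
  filter_upwards [eventually_ge_atTop 0] with x hx
  have hsplit := measureReal_inter_add_sdiff (μ := μ) (s := Iic x)
    (measurableSet_Ici (a := 0)) (hμ x)
  have hIio : Iic x \ Ici 0 = Iio 0 := by
    rw [sdiff_eq, compl_Ici, inter_eq_right]
    exact fun y hy ↦ (mem_Iio.1 hy).le.trans hx
  rw [← hsplit, measureReal_restrict_apply measurableSet_Iic, hIio, mul_add,
    dist_self_add_right, Real.norm_of_nonneg (by positivity)]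

theorem tendsto_mul_integral_exp_iff_tendsto_inv_mul_measureReal_Iic
    (hμ : ∀ s > 0, Integrable (fun x ↦ Real.exp (-(s * x))) μ) :
    Tendsto (fun s ↦ s * ∫ x, Real.exp (-(s * x)) ∂μ) (𝓝[>] 0) (𝓝 C) ↔
      Tendsto (fun x ↦ x⁻¹ * μ.real (Iic x)) atTop (𝓝 C) := by
  have hν₀ : ∀ᵐ x ∂μ.restrict (Ici 0), 0 ≤ x := ae_restrict_mem measurableSet_Ici
  have hν (s : ℝ) (hs : s > 0) : Integrable (fun x ↦ Real.exp (-(s * x))) (μ.restrict (Ici 0)) :=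
    (hμ s hs).restrict
  rw [← tendsto_mul_setIntegral_Ici_exp_iff hμ, ← tendsto_inv_mul_measureReal_restrict_Ici_iff
    (measure_Iic_ne_top_of_integrable_exp one_pos (hμ 1 one_pos))]
  exact ⟨tendsto_inv_mul_measureReal_Iic_of_tendsto_mul_integral_exp hν₀ hν,
    tendsto_mul_integral_exp_of_tendsto_inv_mul_measureReal_Iic hν₀ hν⟩

end Karamata

section Dilation

variable {F G : ℝ → ℝ} {C : ℝ}

/-- `DilationLE F G` says that near infinity `F` is dominated by dilates of `G` by factors
arbitrarily close to `1`, up to additive constants. Domination in both directions preserves the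
linear growth rate. -/
def DilationLE (F G : ℝ → ℝ) : Prop :=
  ∀ θ > 1, ∃ L, ∀ᶠ x in atTop, F x ≤ G (θ * x + L) + L

lemma tendsto_inv_mul_comp_mul_add (hG : Tendsto (fun x ↦ x⁻¹ * G x) atTop (𝓝 C)) {p : ℝ}
    (hp : 0 < p) (q : ℝ) : Tendsto (fun x ↦ x⁻¹ * G (p * x + q)) atTop (𝓝 (C * p)) := by
  have haff : Tendsto (fun x ↦ p * x + q) atTop atTop :=
    tendsto_atTop_add_const_right _ q (tendsto_id.const_mul_atTop hp)
  have hratio : Tendsto (fun x ↦ p + x⁻¹ * q) atTop (𝓝 p) := by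
    simpa using (tendsto_inv_atTop_zero.mul_const q).const_add p
  refine ((hG.comp haff).mul hratio).congr' ?_
  filter_upwards [eventually_gt_atTop 0, haff.eventually_gt_atTop 0] with x hx hpx
  simp only [Function.comp]
  field_simp

lemma DilationLE.eventually_inv_mul_lt (hFG : DilationLE F G)
    (hG : Tendsto (fun x ↦ x⁻¹ * G x) atTop (𝓝 C)) {b : ℝ} (hb : C < b) :
    ∀ᶠ x in atTop, x⁻¹ * F x < b := by
  obtain ⟨θ, hθ, hθb⟩ := exists_one_lt_mul_lt hb
  obtain ⟨L, hL⟩ := hFG θ hθ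
  have hlim : Tendsto (fun x ↦ x⁻¹ * G (θ * x + L) + x⁻¹ * L) atTop (𝓝 (C * θ)) := by
    simpa using (tendsto_inv_mul_comp_mul_add hG (zero_lt_one.trans hθ) L).add
      (tendsto_inv_atTop_zero.mul_const L)
  filter_upwards [hL, hlim.eventually_lt_const hθb, eventually_gt_atTop 0] with x hle hlt hx
  calc x⁻¹ * F x ≤ x⁻¹ * (G (θ * x + L) + L) := by gcongr
    _ < b := by rwa [mul_add]

lemma DilationLE.eventually_lt_inv_mul (hGF : DilationLE G F)
    (hG : Tendsto (fun x ↦ x⁻¹ * G x) atTop (𝓝 C)) {b : ℝ} (hb : b < C) :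
    ∀ᶠ x in atTop, b < x⁻¹ * F x := by
  obtain ⟨θ, ⟨hθ₀, hθ₁⟩, hθb⟩ := exists_mem_Ioo_lt_mul hb
  obtain ⟨L, hL⟩ := hGF θ⁻¹ (one_lt_inv₀ hθ₀ |>.2 hθ₁)
  have hlim : Tendsto (fun x ↦ x⁻¹ * G (θ * x + -(θ * L)) - x⁻¹ * L) atTop (𝓝 (C * θ)) := by
    simpa using (tendsto_inv_mul_comp_mul_add hG hθ₀ (-(θ * L))).sub
      (tendsto_inv_atTop_zero.mul_const L)
  have haff : Tendsto (fun x ↦ θ * x + -(θ * L)) atTop atTop :=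
    tendsto_atTop_add_const_right _ _ (tendsto_id.const_mul_atTop hθ₀)
  filter_upwards [haff.eventually hL, hlim.eventually_const_lt hθb, eventually_gt_atTop 0]
    with x hle hlt hx
  have hinv : θ⁻¹ * (θ * x + -(θ * L)) + L = x := by
    field_simp
    ring
  rw [hinv] at hle
  calc b < x⁻¹ * (G (θ * x + -(θ * L)) - L) := by rwa [mul_sub]
    _ ≤ x⁻¹ * F x := by gcongr; linarith

theorem tendsto_inv_mul_iff_of_dilationLE (hFG : DilationLE F G) (hGF : DilationLE G F) :
    Tendsto (fun x ↦ x⁻¹ * F x) atTop (𝓝 C) ↔ Tendsto (fun x ↦ x⁻¹ * G x) atTop (𝓝 C) :=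
  ⟨fun hF ↦ tendsto_order.2
    ⟨fun _ ↦ hFG.eventually_lt_inv_mul hF, fun _ ↦ hGF.eventually_inv_mul_lt hF⟩,
  fun hG ↦ tendsto_order.2
    ⟨fun _ ↦ hGF.eventually_lt_inv_mul hG, fun _ ↦ hFG.eventually_inv_mul_lt hG⟩⟩

end Dilation

lemma tendsto_inv_mul_log_floor_exp :
    Tendsto (fun x ↦ x⁻¹ * Real.log ⌊Real.exp x⌋₊) atTop (𝓝 1) := by
  have hfloor : Asymptotics.IsEquivalent atTop (fun x ↦ (⌊Real.exp x⌋₊ : ℝ)) Real.exp :=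
    Asymptotics.isEquivalent_nat_floor.comp_tendsto Real.tendsto_exp_atTop
  have hlog := hfloor.log Real.tendsto_exp_atTop
  simp only [Real.log_exp] at hlog
  refine ((Asymptotics.isEquivalent_iff_tendsto_one (eventually_ne_atTop 0)).1 hlog).congr
    fun x ↦ ?_
  rw [Pi.div_apply, div_eq_inv_mul]

lemma tendsto_inv_log_mul_iff_tendsto_inv_mul_comp_floor_exp (S : ℕ → ℝ) {C : ℝ} :
    Tendsto (fun n : ℕ ↦ (Real.log n)⁻¹ * S n) atTop (𝓝 C) ↔
      Tendsto (fun x ↦ x⁻¹ * S ⌊Real.exp x⌋₊) atTop (𝓝 C) := by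
  have hfloor : Tendsto (fun x ↦ ⌊Real.exp x⌋₊) atTop atTop :=
    tendsto_nat_floor_atTop.comp Real.tendsto_exp_atTop
  have hlog : Tendsto (fun n : ℕ ↦ Real.log n) atTop atTop :=
    Real.tendsto_log_atTop.comp tendsto_natCast_atTop_atTop
  constructor
  · intro h
    rw [← one_mul C]
    refine (tendsto_inv_mul_log_floor_exp.mul (h.comp hfloor)).congr' ?_
    filter_upwards [(hlog.comp hfloor).eventually_ne_atTop 0] with x hx
    simp only [Function.comp] at hx ⊢
    rw [mul_assoc, mul_inv_cancel_left₀ hx]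
  · intro h
    refine (h.comp hlog).congr' ?_
    filter_upwards [eventually_gt_atTop 0] with n hn
    simp only [Function.comp, Real.exp_log (Nat.cast_pos.2 hn), Nat.floor_natCast]

lemma add_one_mul_le_tsum_of_antitone {f : ℕ → ℝ} (hf : Antitone f) (hsum : Summable f) (n : ℕ) :
    (n + 1) * f n ≤ ∑' k, f k := by
  have hnonneg (k : ℕ) : 0 ≤ f k := not_lt.1 fun hk ↦ not_summable_of_antitone_of_neg hf hk hsum
  calc (n + 1) * f n = (Finset.range (n + 1)).card • f n := by simp
    _ ≤ ∑ k ∈ Finset.range (n + 1), f k :=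
      Finset.card_nsmul_le_sum _ _ _ fun k hk ↦ hf (Nat.lt_succ_iff.1 (Finset.mem_range.1 hk))
    _ ≤ ∑' k, f k := hsum.sum_le_tsum _ fun k _ ↦ hnonneg k

section DirichletSeries

open MeasureTheory Set

/-- The atomic measure with mass `a k * lam k` at each point `-log (lam k)`. Its Laplace transform
at `s` is the generalized Dirichlet series `∑' k, a k * lam k ^ (1 + s)`. -/
noncomputable def dirichletMeasure (a lam : ℕ → ℝ) : Measure ℝ :=
  Measure.sum fun k ↦ ENNReal.ofReal (a k * lam k) • Measure.dirac (-Real.log (lam k))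

variable {a lam : ℕ → ℝ} {M : ℝ}

lemma mul_exp_neg_mul_neg_log {l : ℝ} (hl : 0 < l) (c s : ℝ) :
    c * l * Real.exp (-(s * -Real.log l)) = c * l ^ (1 + s) := by
  rw [Real.rpow_add hl, Real.rpow_one, Real.rpow_def_of_pos hl, mul_neg, neg_neg, mul_comm s,
    mul_assoc]

lemma integrable_exp_dirichletMeasure (hpos : ∀ k, 0 < lam k) (ha : ∀ k, 0 ≤ a k)
    (hM : ∀ k, a k ≤ M) {s : ℝ} (hsum : Summable fun k ↦ lam k ^ (1 + s)) :
    Integrable (fun x ↦ Real.exp (-(s * x))) (dirichletMeasure a lam) := by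
  refine integrable_sum_dirac (fun _ ↦ ENNReal.ofReal_ne_top) ?_
  refine .of_nonneg_of_le (fun k ↦ by positivity) (fun k ↦ ?_) (hsum.mul_left M)
  rw [ENNReal.toReal_ofReal (mul_nonneg (ha k) (hpos k).le),
    Real.norm_of_nonneg (Real.exp_pos _).le, mul_exp_neg_mul_neg_log (hpos k)]
  have := hpos k
  gcongr
  exact hM k

lemma integral_exp_dirichletMeasure (hpos : ∀ k, 0 < lam k) (ha : ∀ k, 0 ≤ a k) (s : ℝ) :
    ∫ x, Real.exp (-(s * x)) ∂dirichletMeasure a lam = ∑' k, a k * lam k ^ (1 + s) := by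
  rw [dirichletMeasure, integral_sum_dirac fun _ ↦ ENNReal.ofReal_ne_top]
  refine tsum_congr fun k ↦ ?_
  rw [ENNReal.toReal_ofReal (mul_nonneg (ha k) (hpos k).le), smul_eq_mul,
    mul_exp_neg_mul_neg_log (hpos k)]

lemma hasSum_measureReal_Iic_dirichletMeasure (hpos : ∀ k, 0 < lam k) (ha : ∀ k, 0 ≤ a k) {x : ℝ}
    (hfin : dirichletMeasure a lam (Iic x) ≠ ⊤) :
    HasSum (fun k ↦ if -Real.log (lam k) ≤ x then a k * lam k else 0)
      ((dirichletMeasure a lam).real (Iic x)) := by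
  have hint : Integrable ((Iic x).indicator (1 : ℝ → ℝ)) (dirichletMeasure a lam) :=
    (integrable_indicator_iff measurableSet_Iic).2 (integrableOn_const hfin)
  have hsum := hasSum_integral_sum_dirac (fun _ ↦ ENNReal.ofReal_ne_top) hint.summable_of_dirac
  rw [← dirichletMeasure, integral_indicator_one measurableSet_Iic] at hsum
  refine hsum.congr_fun fun k ↦ ?_
  rw [ENNReal.toReal_ofReal (mul_nonneg (ha k) (hpos k).le)]
  simp only [indicator, mem_Iic, Pi.one_apply, smul_eq_mul, mul_ite, mul_one, mul_zero]

theorem tendsto_sub_one_mul_tsum_iff (hpos : ∀ k, 0 < lam k) (ha : ∀ k, 0 ≤ a k) {C : ℝ} :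
    Tendsto (fun s ↦ (s - 1) * ∑' k, a k * lam k ^ s) (𝓝[>] 1) (𝓝 C) ↔
      Tendsto (fun s ↦ s * ∫ x, Real.exp (-(s * x)) ∂dirichletMeasure a lam) (𝓝[>] 0) (𝓝 C) := by
  have hshift : map (fun s : ℝ ↦ 1 + s) (𝓝[>] 0) = 𝓝[>] 1 := by
    simpa only [Homeomorph.coe_addLeft, image_const_add_Ioi, add_zero] using
      (Homeomorph.addLeft (1 : ℝ)).isEmbedding.map_nhdsWithin_eq (Ioi 0) 0
  rw [← hshift, tendsto_map'_iff]
  simp only [integral_exp_dirichletMeasure hpos ha, Function.comp_def, add_sub_cancel_left]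

lemma sum_range_le_measureReal_Iic_add (hpos : ∀ k, 0 < lam k) (ha : ∀ k, 0 ≤ a k)
    (hM : ∀ k, a k ≤ M) {x : ℝ} (hfin : dirichletMeasure a lam (Iic x) ≠ ⊤) :
    ∑ k ∈ Finset.range ⌊Real.exp x⌋₊, a k * lam k ≤ (dirichletMeasure a lam).real (Iic x) + M := by
  have hM₀ : 0 ≤ M := (ha 0).trans (hM 0)
  have hterm (k : ℕ) : a k * lam k ≤
      (if -Real.log (lam k) ≤ x then a k * lam k else 0) + M * Real.exp (-x) := by
    split_ifs with hk
    · exact le_add_of_nonneg_right (by positivity)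
    · have hlam : lam k ≤ Real.exp (-x) :=
        ((Real.log_lt_iff_lt_exp (hpos k)).1 (lt_neg.1 (not_le.1 hk))).le
      rw [zero_add]
      exact mul_le_mul (hM k) hlam (hpos k).le hM₀
  have hsmall : ⌊Real.exp x⌋₊ * (M * Real.exp (-x)) ≤ M :=
    calc ⌊Real.exp x⌋₊ * (M * Real.exp (-x)) ≤ Real.exp x * (M * Real.exp (-x)) := by
          gcongr
          exact Nat.floor_le (Real.exp_pos x).le
      _ = M := by rw [Real.exp_neg]; field_simp
  calc ∑ k ∈ Finset.range ⌊Real.exp x⌋₊, a k * lam k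
      ≤ ∑ k ∈ Finset.range ⌊Real.exp x⌋₊,
          ((if -Real.log (lam k) ≤ x then a k * lam k else 0) + M * Real.exp (-x)) :=
        Finset.sum_le_sum fun k _ ↦ hterm k
    _ ≤ (dirichletMeasure a lam).real (Iic x) + M := by
      rw [Finset.sum_add_distrib, Finset.sum_const, Finset.card_range, nsmul_eq_mul]
      refine add_le_add (sum_le_hasSum _ (fun k _ ↦ ?_)
        (hasSum_measureReal_Iic_dirichletMeasure hpos ha hfin)) hsmall
      have := mul_nonneg (ha k) (hpos k).le
      split_ifs <;> simp [this]

lemma lt_floor_exp_of_neg_log_le (hpos : ∀ k, 0 < lam k) (hmono : Antitone lam) {θ : ℝ} (hθ : 0 ≤ θ)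
    (hsum : Summable fun k ↦ lam k ^ θ) {x : ℝ} {k : ℕ} (hk : -Real.log (lam k) ≤ x) :
    k < ⌊Real.exp (θ * x + ∑' j, lam j ^ θ)⌋₊ := by
  set Z := ∑' j, lam j ^ θ
  have hanti : Antitone fun k ↦ lam k ^ θ := fun m n hmn ↦
    Real.rpow_le_rpow (hpos n).le (hmono hmn) hθ
  have hcount := add_one_mul_le_tsum_of_antitone hanti hsum k
  have hpow : Real.exp (-(θ * x)) ≤ lam k ^ θ := by
    rw [Real.rpow_def_of_pos (hpos k)]
    exact Real.exp_le_exp.2 (by nlinarith)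
  refine Nat.lt_of_succ_le (Nat.le_floor ?_)
  push_cast
  calc (k + 1 : ℝ) = (k + 1) * Real.exp (-(θ * x)) * Real.exp (θ * x) := by
        rw [mul_assoc, ← Real.exp_add]; simp
    _ ≤ (k + 1) * lam k ^ θ * Real.exp (θ * x) := by gcongr
    _ ≤ Z * Real.exp (θ * x) := by gcongr
    _ ≤ Real.exp Z * Real.exp (θ * x) := by gcongr; linarith [Real.add_one_le_exp Z]
    _ = Real.exp (θ * x + Z) := by rw [← Real.exp_add, add_comm]

lemma measureReal_Iic_le_sum_range (hpos : ∀ k, 0 < lam k) (hmono : Antitone lam)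
    (ha : ∀ k, 0 ≤ a k) {θ : ℝ} (hθ : 0 ≤ θ) (hsum : Summable fun k ↦ lam k ^ θ) {x : ℝ}
    (hfin : dirichletMeasure a lam (Iic x) ≠ ⊤) :
    (dirichletMeasure a lam).real (Iic x) ≤
      ∑ k ∈ Finset.range ⌊Real.exp (θ * x + ∑' j, lam j ^ θ)⌋₊, a k * lam k := by
  refine hasSum_le_of_sum_le (hasSum_measureReal_Iic_dirichletMeasure hpos ha hfin) fun t ↦ ?_
  rw [← Finset.sum_filter]
  refine Finset.sum_le_sum_of_subset_of_nonneg (fun k hk ↦ ?_) fun k _ _ ↦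
    mul_nonneg (ha k) (hpos k).le
  exact Finset.mem_range.2
    (lt_floor_exp_of_neg_log_le hpos hmono hθ hsum (Finset.mem_filter.1 hk).2)

lemma dilationLE_sum_range_measureReal_Iic (hpos : ∀ k, 0 < lam k) (ha : ∀ k, 0 ≤ a k)
    (hM : ∀ k, a k ≤ M) (hfin : ∀ x, dirichletMeasure a lam (Iic x) ≠ ⊤) :
    DilationLE (fun x ↦ ∑ k ∈ Finset.range ⌊Real.exp x⌋₊, a k * lam k)
      (fun x ↦ (dirichletMeasure a lam).real (Iic x)) := by
  refine fun θ hθ ↦ ⟨M, ?_⟩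
  filter_upwards [eventually_ge_atTop 0] with x hx
  have hdil : x ≤ θ * x + M := by nlinarith [(ha 0).trans (hM 0)]
  exact (sum_range_le_measureReal_Iic_add hpos ha hM (hfin x)).trans
    (add_le_add_left (monotone_measureReal_Iic hfin hdil) M)

lemma dilationLE_measureReal_Iic_sum_range (hpos : ∀ k, 0 < lam k) (hmono : Antitone lam)
    (hsum : ∀ s : ℝ, 1 < s → Summable fun k ↦ lam k ^ s) (ha : ∀ k, 0 ≤ a k)
    (hfin : ∀ x, dirichletMeasure a lam (Iic x) ≠ ⊤) :
    DilationLE (fun x ↦ (dirichletMeasure a lam).real (Iic x))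
      (fun x ↦ ∑ k ∈ Finset.range ⌊Real.exp x⌋₊, a k * lam k) := by
  refine fun θ hθ ↦ ⟨∑' j, lam j ^ θ, .of_forall fun x ↦ ?_⟩
  exact (measureReal_Iic_le_sum_range hpos hmono ha (zero_le_one.trans hθ.le) (hsum θ hθ)
    (hfin x)).trans (le_add_of_nonneg_right (tsum_nonneg fun j ↦ Real.rpow_nonneg (hpos j).le θ))

end DirichletSeries

/-- the Hardy–Littlewood Tauberian theorem used in the paper.
For a nonincreasing positive sequence `(λ_k)` with `∑ λ_k^s < ∞` for every `s > 1`, and a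
bounded nonnegative sequence `(a_k)`,
`lim_{s→1⁺} (s−1) ∑ a_k λ_k^s = C` iff `lim_n (1/log n) ∑_{k<n} a_k λ_k = C`. -/
theorem statement5 (lam : ℕ → ℝ) (hpos : ∀ k, 0 < lam k)
    (hmono : ∀ m n : ℕ, m ≤ n → lam n ≤ lam m)
    (hsum : ∀ s : ℝ, 1 < s → Summable (fun k => lam k ^ s))
    (a : ℕ → ℝ) (ha0 : ∀ k, 0 ≤ a k) (hbd : ∃ M : ℝ, ∀ k, a k ≤ M) (C : ℝ) :
    Tendsto (fun s : ℝ => (s - 1) * ∑' k : ℕ, a k * lam k ^ s) (𝓝[>] (1 : ℝ)) (𝓝 C) ↔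
      Tendsto (fun n : ℕ => (Real.log n)⁻¹ * ∑ k ∈ Finset.range n, a k * lam k)
        atTop (𝓝 C) := by
  obtain ⟨M, hM⟩ := hbd
  have hexp (s : ℝ) (hs : s > 0) :
      MeasureTheory.Integrable (fun x ↦ Real.exp (-(s * x))) (dirichletMeasure a lam) :=
    integrable_exp_dirichletMeasure hpos ha0 hM (hsum (1 + s) (lt_add_of_pos_right 1 hs))
  have hfin := measure_Iic_ne_top_of_integrable_exp one_pos (hexp 1 one_pos)
  rw [tendsto_sub_one_mul_tsum_iff hpos ha0,
    tendsto_mul_integral_exp_iff_tendsto_inv_mul_measureReal_Iic hexp,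
    tendsto_inv_mul_iff_of_dilationLE
      (dilationLE_measureReal_Iic_sum_range hpos (fun m n ↦ hmono m n) hsum ha0 hfin)
      (dilationLE_sum_range_measureReal_Iic hpos ha0 hM hfin)]
  exact (tendsto_inv_log_mul_iff_tendsto_inv_mul_comp_floor_exp
    fun n ↦ ∑ k ∈ Finset.range n, a k * lam k).symm
end
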